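/- The spaces S_{14,2}(Γ₂,ε) and S_{16,2}(Γ₂,ε) are both zero. -/

import Mathlib

noncomputable section

open Matrix Complex Filter Topology

/-- The standard symplectic form matrix of size 4. -/
def J4 : Matrix (Fin 4) (Fin 4) ℤ := !![0,0,1,0; 0,0,0,1; -1,0,0,0; 0,-1,0,0]

/-- The Siegel modular group `Γ₂ = Sp(4,ℤ)`, as a set of 4×4 integer matrices. -/
def Sp4Z : Set (Matrix (Fin 4) (Fin 4) ℤ) := {γ | γᵀ * J4 * γ = J4}

/-- The principal congruence subgroup `Γ₂[2]` of level 2. -/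
def Sp4Z2 : Set (Matrix (Fin 4) (Fin 4) ℤ) :=
  {γ | γ ∈ Sp4Z ∧ ∀ i j, ((γ i j : ZMod 2) = if i = j then 1 else 0)}

/-- The Siegel upper half space of degree 2: symmetric 2×2 complex matrices with
positive definite imaginary part (encoded as functions `Fin 2 → Fin 2 → ℂ`). -/
def H2 : Set (Fin 2 → Fin 2 → ℂ) :=
  {τ | (Matrix.of τ).IsSymm ∧ (Matrix.of fun i j => (τ i j).im).PosDef}

/-- The four 2×2 blocks of a 4×4 integer matrix, as complex matrices. -/
def blk (γ : Matrix (Fin 4) (Fin 4) ℤ) (r s : Fin 2) : Matrix (Fin 2) (Fin 2) ℂ :=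
  Matrix.of fun i j =>
    ((γ ⟨2 * (r : ℕ) + (i : ℕ), by have h1 := r.isLt; have h2 := i.isLt; omega⟩
        ⟨2 * (s : ℕ) + (j : ℕ), by have h1 := s.isLt; have h2 := j.isLt; omega⟩ : ℤ) : ℂ)

/-- The factor `cτ + d`. -/
def den (γ : Matrix (Fin 4) (Fin 4) ℤ) (τ : Fin 2 → Fin 2 → ℂ) : Matrix (Fin 2) (Fin 2) ℂ :=
  blk γ 1 0 * Matrix.of τ + blk γ 1 1

/-- The action `γ·τ = (aτ+b)(cτ+d)⁻¹` of `Sp(4)` on the Siegel upper half space. -/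
def moeb (γ : Matrix (Fin 4) (Fin 4) ℤ) (τ : Fin 2 → Fin 2 → ℂ) : Fin 2 → Fin 2 → ℂ :=
  fun i j => ((blk γ 0 0 * Matrix.of τ + blk γ 0 1) * (den γ τ)⁻¹) i j

/-- Matrix coefficients of the `j`-th symmetric power of the standard representation of
`GL(2,ℂ)`, in the basis `x₁^(j-i) x₂^i`. -/
def symCoeff (j : ℕ) (m : Matrix (Fin 2) (Fin 2) ℂ) (l i : Fin (j + 1)) : ℂ :=
  (((Polynomial.C (m 0 0) + Polynomial.C (m 1 0) * Polynomial.X) ^ (j - (l : ℕ)) *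
    (Polynomial.C (m 0 1) + Polynomial.C (m 1 1) * Polynomial.X) ^ (l : ℕ)).coeff i)

/-- The `j`-th symmetric power `Sym^j(m)` acting on coordinate vectors. -/
def symAct (j : ℕ) (m : Matrix (Fin 2) (Fin 2) ℂ) (v : Fin (j + 1) → ℂ) : Fin (j + 1) → ℂ :=
  fun i => ∑ l, symCoeff j m l i * v l

lemma symAct_add (j : ℕ) (m : Matrix (Fin 2) (Fin 2) ℂ) (v w : Fin (j + 1) → ℂ) :
    symAct j m (v + w) = symAct j m v + symAct j m w := by
  funext i
  simp [symAct, mul_add, Finset.sum_add_distrib]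

lemma symAct_smul (j : ℕ) (m : Matrix (Fin 2) (Fin 2) ℂ) (a : ℂ) (v : Fin (j + 1) → ℂ) :
    symAct j m (a • v) = a • symAct j m v := by
  funext i
  simp only [symAct, Pi.smul_apply, smul_eq_mul, Finset.mul_sum]
  exact Finset.sum_congr rfl fun l _ => by ring

lemma symAct_zero (j : ℕ) (m : Matrix (Fin 2) (Fin 2) ℂ) : symAct j m 0 = 0 := by
  funext i; simp [symAct]

/-- The weight `(j,k)` automorphy action `Sym^j(m) ⊗ det(m)^k`. -/
def wt (j : ℕ) (k : ℤ) (m : Matrix (Fin 2) (Fin 2) ℂ) (v : Fin (j + 1) → ℂ) :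
    Fin (j + 1) → ℂ :=
  (m.det ^ k) • symAct j m v

lemma wt_add (j : ℕ) (k : ℤ) (m : Matrix (Fin 2) (Fin 2) ℂ) (v w : Fin (j + 1) → ℂ) :
    wt j k m (v + w) = wt j k m v + wt j k m w := by
  simp [wt, symAct_add, smul_add]

lemma wt_smul (j : ℕ) (k : ℤ) (m : Matrix (Fin 2) (Fin 2) ℂ) (a : ℂ) (v : Fin (j + 1) → ℂ) :
    wt j k m (a • v) = a • wt j k m v := by
  rw [wt, wt, symAct_smul, smul_comm]

lemma wt_zero (j : ℕ) (k : ℤ) (m : Matrix (Fin 2) (Fin 2) ℂ) : wt j k m 0 = 0 := by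
  simp [wt, symAct_zero]

/-- The slash operation `(F|γ)(τ) = Sym^j(cτ+d)⁻¹ det(cτ+d)⁻ᵏ F(γ·τ)`. -/
def slashS (j : ℕ) (k : ℤ) (γ : Matrix (Fin 4) (Fin 4) ℤ)
    (F : (Fin 2 → Fin 2 → ℂ) → (Fin (j + 1) → ℂ)) (τ : Fin 2 → Fin 2 → ℂ) :
    Fin (j + 1) → ℂ :=
  ((den γ τ).det ^ (-k)) • symAct j ((den γ τ)⁻¹) (F (moeb γ τ))

lemma slashS_add (j : ℕ) (k : ℤ) (γ : Matrix (Fin 4) (Fin 4) ℤ)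
    (F G : (Fin 2 → Fin 2 → ℂ) → (Fin (j + 1) → ℂ)) (τ : Fin 2 → Fin 2 → ℂ) :
    slashS j k γ (F + G) τ = slashS j k γ F τ + slashS j k γ G τ := by
  simp [slashS, symAct_add, smul_add]

lemma slashS_smul (j : ℕ) (k : ℤ) (γ : Matrix (Fin 4) (Fin 4) ℤ) (a : ℂ)
    (F : (Fin 2 → Fin 2 → ℂ) → (Fin (j + 1) → ℂ)) (τ : Fin 2 → Fin 2 → ℂ) :
    slashS j k γ (a • F) τ = a • slashS j k γ F τ := by
  simp only [slashS, Pi.smul_apply, symAct_smul]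
  rw [smul_comm]

lemma slashS_zero (j : ℕ) (k : ℤ) (γ : Matrix (Fin 4) (Fin 4) ℤ) (τ : Fin 2 → Fin 2 → ℂ) :
    slashS j k γ (0 : (Fin 2 → Fin 2 → ℂ) → (Fin (j + 1) → ℂ)) τ = 0 := by
  simp [slashS, symAct_zero]

/-- The diagonal point `diag(τ₁,τ₂)` of the Siegel upper half space. -/
def diagH (τ₁ τ₂ : ℂ) : Fin 2 → Fin 2 → ℂ :=
  fun i j => if i = j then (if i = 0 then τ₁ else τ₂) else 0

/-- `F` is a Siegel cusp form of degree 2 and weight `(j,k)` on `Γ`, with character `χ`: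
holomorphic on `ℍ₂`, transforming by `F(γ·τ) = χ(γ) Sym^j(cτ+d) det(cτ+d)^k F(τ)` for `γ ∈ Γ`,
with `(F|γ)(diag(τ₁,it)) → 0` as `t → ∞` for every `γ ∈ Γ₂`, and (normalization) vanishing
off `ℍ₂`. -/
def IsSiegelCuspForm (j : ℕ) (k : ℤ) (Γ : Set (Matrix (Fin 4) (Fin 4) ℤ))
    (χ : Matrix (Fin 4) (Fin 4) ℤ → ℂ)
    (F : (Fin 2 → Fin 2 → ℂ) → (Fin (j + 1) → ℂ)) : Prop :=
  DifferentiableOn ℂ F H2 ∧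
  (∀ γ ∈ Γ, ∀ τ ∈ H2, F (moeb γ τ) = χ γ • wt j k (den γ τ) (F τ)) ∧
  (∀ γ ∈ Sp4Z, ∀ τ₁ : ℂ, 0 < τ₁.im →
    Tendsto (fun t : ℝ => slashS j k γ F (diagH τ₁ (t * Complex.I))) atTop (𝓝 0)) ∧
  (∀ τ, τ ∉ H2 → F τ = 0)

/-- The space `S_{j,k}(Γ, χ)` of Siegel cusp forms of degree 2 and weight `(j,k)` on `Γ`
with character `χ`, as a complex vector space. -/
def SiegelCusp (j : ℕ) (k : ℤ) (Γ : Set (Matrix (Fin 4) (Fin 4) ℤ))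
    (χ : Matrix (Fin 4) (Fin 4) ℤ → ℂ) :
    Submodule ℂ ((Fin 2 → Fin 2 → ℂ) → (Fin (j + 1) → ℂ)) where
  carrier := {F | IsSiegelCuspForm j k Γ χ F}
  add_mem' := by
    rintro F G hF hG
    refine ⟨hF.1.add hG.1, ?_, ?_, ?_⟩
    · intro γ hγ τ hτ
      show F (moeb γ τ) + G (moeb γ τ) = χ γ • wt j k (den γ τ) (F τ + G τ)
      rw [wt_add, smul_add, hF.2.1 γ hγ τ hτ, hG.2.1 γ hγ τ hτ]
    · intro γ hγ τ₁ hτ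
      have h := (hF.2.2.1 γ hγ τ₁ hτ).add (hG.2.2.1 γ hγ τ₁ hτ)
      rw [add_zero] at h
      exact h.congr fun t => (slashS_add j k γ F G _).symm
    · intro τ hτ
      show F τ + G τ = 0
      rw [hF.2.2.2 τ hτ, hG.2.2.2 τ hτ, add_zero]
  zero_mem' := by
    refine ⟨?_, ?_, ?_, ?_⟩
    · exact differentiableOn_const 0
    · intro γ hγ τ hτ
      show (0 : Fin (j + 1) → ℂ) = χ γ • wt j k (den γ τ) 0
      rw [wt_zero, smul_zero]
    · intro γ hγ τ₁ hτ
      have : (fun t : ℝ => slashS j k γ (0 : (Fin 2 → Fin 2 → ℂ) → (Fin (j + 1) → ℂ))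
          (diagH τ₁ (t * Complex.I))) = fun _ => 0 := by
        funext t; exact slashS_zero j k γ _
      rw [this]
      exact tendsto_const_nhds
    · intro τ _; rfl
  smul_mem' := by
    rintro a F hF
    refine ⟨hF.1.const_smul a, ?_, ?_, ?_⟩
    · intro γ hγ τ hτ
      show a • F (moeb γ τ) = χ γ • wt j k (den γ τ) (a • F τ)
      rw [hF.2.1 γ hγ τ hτ, wt_smul, smul_comm]
    · intro γ hγ τ₁ hτ
      have h := (hF.2.2.1 γ hγ τ₁ hτ).const_smul a
      rw [smul_zero] at h
      exact h.congr fun t => (slashS_smul j k γ a F _).symm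
    · intro τ hτ
      show a • F τ = 0
      rw [hF.2.2.2 τ hτ, smul_zero]

/-- `ε` is (on `Γ₂`) the unique nontrivial homomorphism `Γ₂ → {±1}`. -/
def IsEps (ε : Matrix (Fin 4) (Fin 4) ℤ → ℂ) : Prop :=
  (∀ γ ∈ Sp4Z, ε γ = 1 ∨ ε γ = -1) ∧
  (∀ γ ∈ Sp4Z, ∀ δ ∈ Sp4Z, ε (γ * δ) = ε γ * ε δ) ∧
  (∃ γ ∈ Sp4Z, ε γ ≠ 1)

open MeasureTheory in
/-- Fourier coefficient on the line of height y, period 2. -/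
def co {E : Type*} [NormedAddCommGroup E] [NormedSpace ℂ E] (n : ℤ) (y : ℝ) (f : ℂ → E) : E :=
  (1 / 2 : ℂ) • ∫ x in (0:ℝ)..2, cexp (-(Real.pi * I * n * (x + y * I))) • f (x + y * I)

section coSection

variable {E : Type*} [NormedAddCommGroup E] [NormedSpace ℂ E]

lemma co_congr {n : ℤ} {y : ℝ} {f g : ℂ → E} (h : ∀ x : ℝ, f (x + y * I) = g (x + y * I)) :
    co n y f = co n y g := by
  simp only [co, h]

lemma co_zero (n : ℤ) (y : ℝ) : co n y (fun _ => (0 : E)) = 0 := by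
  simp [co]

lemma co_smul (n : ℤ) (y : ℝ) (c : ℂ) (f : ℂ → E) :
    co n y (fun z => c • f z) = c • co n y f := by
  simp only [co]
  rw [smul_comm c, ← intervalIntegral.integral_smul c]
  congr 2
  funext x
  rw [smul_comm]

lemma co_neg (n : ℤ) (y : ℝ) (f : ℂ → E) :
    co n y (fun z => - f z) = - co n y f := by
  simpa using co_smul n y (-1) f

lemma co_sub (n : ℤ) (y : ℝ) (f g : ℂ → E) (hf : Continuous fun x : ℝ => f (x + y * I))
    (hg : Continuous fun x : ℝ => g (x + y * I)) :
    co n y (fun z => f z - g z) = co n y f - co n y g := by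
  simp only [co]
  rw [← smul_sub, ← intervalIntegral.integral_sub]
  · simp only [smul_sub]
  · apply Continuous.intervalIntegrable
    exact Continuous.smul (by fun_prop) hf
  · apply Continuous.intervalIntegrable
    exact Continuous.smul (by fun_prop) hg

lemma co_clm [CompleteSpace E] {F : Type*} [NormedAddCommGroup F] [NormedSpace ℂ F]
    [CompleteSpace F] (L : E →L[ℂ] F) (n : ℤ) (y : ℝ) (f : ℂ → E)
    (hf : Continuous fun x : ℝ => f (x + y * I)) :
    co n y (fun z => L (f z)) = L (co n y f) := by
  simp only [co]
  rw [map_smul, ← L.intervalIntegral_comp_comm]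
  · simp only [map_smul]
  · apply Continuous.intervalIntegrable
    exact Continuous.smul (by fun_prop) hf

lemma co_exp (n s : ℤ) (y : ℝ) (f : ℂ → E) :
    co n y (fun z => cexp (Real.pi * I * s * z) • f z) = co (n - s) y f := by
  simp only [co]
  congr 2
  funext x
  rw [smul_smul, ← Complex.exp_add]
  congr 2
  push_cast
  ring

lemma co_per_aux (n : ℤ) (y : ℝ) (f : ℂ → E) (hp : ∀ x : ℝ, f (x + y * I + 2) = f (x + y * I)) :
    Function.Periodic
      (fun x : ℝ => cexp (-(Real.pi * I * n * (x + y * I))) • f (x + y * I)) 2 := by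
  intro x
  have h1 : ((x + 2 : ℝ) : ℂ) + y * I = x + y * I + 2 := by push_cast; ring
  simp only [h1, hp]
  congr 1
  rw [Complex.exp_eq_exp_iff_exists_int]
  exact ⟨-n, by push_cast; ring⟩

lemma co_shift (n : ℤ) (y y' : ℝ) (s : ℂ) (f : ℂ → E) (hy : y + s.im = y')
    (hp : ∀ x : ℝ, f (x + y' * I + 2) = f (x + y' * I)) :
    co n y (fun z => f (z + s)) = cexp (Real.pi * I * n * s) • co n y' f := by
  simp only [co]
  rw [smul_comm, ← intervalIntegral.integral_smul]
  have key := co_per_aux n y' f hp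
  set P := (fun x : ℝ => cexp (-(Real.pi * I * n * (x + y' * I))) • f (x + y' * I)) with hP
  have h1 : ∀ x : ℝ, cexp (-(Real.pi * I * n * (x + y * I))) • f (x + y * I + s)
      = cexp (Real.pi * I * n * s) • P (x + s.re) := by
    intro x
    have : (x : ℂ) + y * I + s = ((x + s.re : ℝ) : ℂ) + y' * I := by
      rw [← hy]; push_cast
      conv_lhs => rw [← Complex.re_add_im s]
      ring
    rw [hP]
    simp only [← this, smul_smul, ← Complex.exp_add]
    congr 2
    ring
  have h2 : ∀ x : ℝ, cexp (-(Real.pi * I * n * (x + y' * I))) • f (x + y' * I) = P x :=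
    fun x => rfl
  simp only [h1]
  rw [intervalIntegral.integral_smul, intervalIntegral.integral_smul,
    intervalIntegral.integral_comp_add_right]
  have := key.intervalIntegral_add_eq (s.re) 0
  simp only [zero_add] at this ⊢
  rw [← this, add_comm s.re]

lemma co_refl (n : ℤ) (y : ℝ) (f : ℂ → E)
    (hp : ∀ x : ℝ, f (x + (-y : ℝ) * I + 2) = f (x + (-y : ℝ) * I)) :
    co n y (fun z => f (-z)) = co (-n) (-y) f := by
  simp only [co]
  congr 1
  have key := co_per_aux (-n) (-y) f hp
  set P := (fun x : ℝ => cexp (-(Real.pi * I * (-n : ℤ) * (x + (-y : ℝ) * I))) •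
    f (x + (-y : ℝ) * I)) with hP
  have h1 : ∀ x : ℝ, cexp (-(Real.pi * I * n * (x + y * I))) • f (-(x + y * I))
      = P (-x) := by
    intro x
    have : -((x : ℂ) + y * I) = ((-x : ℝ) : ℂ) + (-y : ℝ) * I := by
      push_cast
      ring
    rw [hP]
    simp only [← this]
    congr 2
    push_cast
    ring
  simp only [h1]
  rw [intervalIntegral.integral_comp_neg]
  have := key.intervalIntegral_add_eq (-2) 0
  simpa using this

/-- antiperiodic functions have no even coefficients -/
lemma co_even (n : ℤ) (y : ℝ) (f : ℂ → E) (hp : ∀ x : ℝ, f (x + y * I + 1) = - f (x + y * I))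
    (hn : Even n) : co n y f = 0 := by
  have hp2 : ∀ x : ℝ, f (x + y * I + 2) = f (x + y * I) := by
    intro x
    have h1 := hp (x + 1)
    have h2 : ((x + 1 : ℝ) : ℂ) + y * I = x + y * I + 1 := by push_cast; ring
    rw [h2, hp, neg_neg] at h1
    rw [← h1]; congr 1; ring
  have h := co_shift n y y 1 f (by simp) hp2
  rw [co_congr (g := fun z => - f z) hp, co_neg] at h
  obtain ⟨k, rfl⟩ := hn
  have : cexp (Real.pi * I * ((k + k : ℤ) : ℂ) * 1) = 1 := by
    rw [Complex.exp_eq_one_iff]; exact ⟨k, by push_cast; ring⟩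
  rw [this, one_smul] at h
  have h3 : (2 : ℂ) • co (k + k) y f = 0 := by
    rw [two_smul]; nth_rw 1 [← h]; simp
  simpa using h3

lemma co_indep (n : ℤ) (y1 y2 : ℝ) (f : ℂ → E)
    (hp1 : ∀ x : ℝ, ∀ y ∈ Set.uIcc y1 y2, f (x + y * I + 2) = f (x + y * I))
    (hd : DifferentiableOn ℂ f {z | z.im ∈ Set.uIcc y1 y2}) : co n y1 f = co n y2 f := by
  simp only [co]
  congr 1
  set P := (fun z : ℂ => cexp (-(Real.pi * I * n * z)) • f z) with hP
  have hPd : DifferentiableOn ℂ P {z | z.im ∈ Set.uIcc y1 y2} := by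
    apply DifferentiableOn.smul _ hd
    fun_prop
  have h := Complex.integral_boundary_rect_eq_zero_of_differentiableOn P (y1 * I) (2 + y2 * I)
    (hPd.mono (by
      intro z hz
      rw [Complex.mem_reProdIm] at hz
      simpa using hz.2))
  simp at h
  have hper : ∫ y in y1..y2, P (2 + y * I) = ∫ y in y1..y2, P (y * I) := by
    apply intervalIntegral.integral_congr
    intro y hy
    have h0 := hp1 0 y hy
    simp only [Complex.ofReal_zero, zero_add] at h0
    simp only [hP]
    rw [add_comm (2 : ℂ), h0]
    congr 1
    rw [Complex.exp_eq_exp_iff_exists_int]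
    exact ⟨-n, by push_cast; ring⟩
  rw [hper] at h
  simp at h
  exact sub_eq_zero.mp h

lemma co_norm (n : ℤ) (y : ℝ) (f : ℂ → E) (C : ℝ) (h : ∀ x ∈ Set.Icc (0:ℝ) 2,
    ‖f (x + y * I)‖ ≤ C) : ‖co n y f‖ ≤ Real.exp (Real.pi * n * y) * C := by
  simp only [co]
  rw [norm_smul]
  have : ‖∫ x in (0:ℝ)..2, cexp (-(Real.pi * I * n * (x + y * I))) • f (x + y * I)‖
      ≤ (Real.exp (Real.pi * n * y) * C) * |2 - 0| := by
    apply intervalIntegral.norm_integral_le_of_norm_le_const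
    intro x hx
    rw [Set.uIoc_of_le (by norm_num)] at hx
    rw [norm_smul, Complex.norm_exp]
    have h1 : (-(Real.pi * I * n * (x + y * I)) : ℂ).re = Real.pi * n * y := by
      simp
    rw [h1]
    exact mul_le_mul_of_nonneg_left (h x ⟨hx.1.le, hx.2⟩) (Real.exp_pos _).le
  norm_num at this ⊢
  linarith

lemma co_cont {X : Type*} [TopologicalSpace X] (n : ℤ) (y : ℝ) (f : X → ℂ → E)
    (hf : Continuous fun p : X × ℝ => f p.1 (p.2 + y * I)) :
    Continuous fun p : X => co n y (f p) := by
  simp only [co]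
  apply Continuous.const_smul
  apply intervalIntegral.continuous_parametric_intervalIntegral_of_continuous'
  simp only [Function.uncurry_def]
  exact Continuous.smul (by fun_prop) hf

lemma co_swap [CompleteSpace E] (n m : ℤ) (y y' : ℝ) (f : ℂ → ℂ → E)
    (hf : Continuous fun p : ℝ × ℝ => f (p.1 + y * I) (p.2 + y' * I)) :
    co n y (fun a => co m y' (fun b => f a b)) = co m y' (fun b => co n y (fun a => f a b)) := by
  simp only [co]
  have h1 : ∀ x : ℝ, cexp (-(Real.pi * I * n * (x + y * I))) • ((1 / 2 : ℂ) •
      ∫ x' in (0:ℝ)..2, cexp (-(Real.pi * I * m * (x' + y' * I))) • f (x + y * I) (x' + y' * I))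
      = (1 / 2 : ℂ) • ∫ x' in (0:ℝ)..2, cexp (-(Real.pi * I * n * (x + y * I))) •
        cexp (-(Real.pi * I * m * (x' + y' * I))) • f (x + y * I) (x' + y' * I) := by
    intro x
    rw [smul_comm, ← intervalIntegral.integral_smul]
  have h2 : ∀ x' : ℝ, cexp (-(Real.pi * I * m * (x' + y' * I))) • ((1 / 2 : ℂ) •
      ∫ x in (0:ℝ)..2, cexp (-(Real.pi * I * n * (x + y * I))) • f (x + y * I) (x' + y' * I))
      = (1 / 2 : ℂ) • ∫ x in (0:ℝ)..2, cexp (-(Real.pi * I * n * (x + y * I))) •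
        cexp (-(Real.pi * I * m * (x' + y' * I))) • f (x + y * I) (x' + y' * I) := by
    intro x'
    rw [smul_comm, ← intervalIntegral.integral_smul]
    congr 2
    funext x
    rw [smul_comm]
  simp only [h1, h2]
  rw [intervalIntegral.integral_smul, intervalIntegral.integral_smul,
    MeasureTheory.intervalIntegral_intervalIntegral_swap]
  have hc : Continuous (Function.uncurry fun x x' : ℝ => cexp (-(Real.pi * I * n * (x + y * I))) •
        cexp (-(Real.pi * I * m * (x' + y' * I))) • f (x + y * I) (x' + y' * I)) := by
    simp only [Function.uncurry_def]
    exact Continuous.smul (by fun_prop) (Continuous.smul (by fun_prop) hf)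
  apply (hc.continuousOn.integrableOn_compact (K := Set.Icc (0:ℝ) 2 ×ˢ Set.Icc (0:ℝ) 2)
    (isCompact_Icc.prod isCompact_Icc)).mono_set
  rw [Set.uIoc_of_le (by norm_num)]
  exact Set.prod_mono Set.Ioc_subset_Icc_self Set.Ioc_subset_Icc_self

end coSection

instance fact_two_pos : Fact (0 < (2 : ℝ)) := ⟨by norm_num⟩

lemma co_inversion (y : ℝ) (f : ℂ → ℂ) (hc : Continuous fun x : ℝ => f (x + y * I))
    (hp : ∀ x : ℝ, f (x + y * I + 2) = f (x + y * I))
    (hs : Summable fun n : ℤ => co n y f * cexp (Real.pi * I * n * (y * I))) (x : ℝ) :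
    HasSum (fun n : ℤ => co n y f * cexp (Real.pi * I * n * (x + y * I))) (f (x + y * I)) := by
  have hper : Function.Periodic (fun x : ℝ => f (x + y * I)) 2 := by
    intro x
    have h1 : ((x + 2 : ℝ) : ℂ) + y * I = x + y * I + 2 := by push_cast; ring
    simp only [h1, hp]
  let g : C(AddCircle (2:ℝ), ℂ) := ⟨hper.lift, by
    rw [continuous_coinduced_dom]
    exact hc⟩
  have hg : ∀ x : ℝ, g (x : AddCircle (2:ℝ)) = f (x + y * I) := fun x => rfl
  have hfc : ∀ n : ℤ, fourierCoeff g n = co n y f * cexp (Real.pi * I * n * (y * I)) := by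
    intro n
    rw [fourierCoeff_eq_intervalIntegral (g) n 0]
    simp only [co, smul_eq_mul]
    rw [mul_assoc, mul_comm _ (cexp _), ← intervalIntegral.integral_const_mul, zero_add,
      Complex.real_smul]
    congr 1
    · norm_num
    · congr 1
      funext t
      rw [hg, fourier_coe_apply, ← mul_assoc, ← Complex.exp_add]
      congr 2
      push_cast
      ring
  have hs' : Summable (fourierCoeff g) := by
    refine hs.congr ?_
    intro n; rw [hfc]
  have := has_pointwise_sum_fourier_series_of_summable hs' (x : AddCircle (2:ℝ))
  rw [hg] at this
  convert this using 2 with n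
  rw [hfc, fourier_coe_apply, smul_eq_mul, mul_assoc (co n y f), ← Complex.exp_add]
  congr 2
  push_cast
  ring

lemma co_all_zero (y : ℝ) (f : ℂ → ℂ) (hc : Continuous fun x : ℝ => f (x + y * I))
    (hp : ∀ x : ℝ, f (x + y * I + 2) = f (x + y * I)) (h0 : ∀ n, co n y f = 0) (x : ℝ) :
    f (x + y * I) = 0 := by
  have := co_inversion y f hc hp (by simp only [h0]; simp) x
  simp only [h0, zero_mul] at this
  exact this.unique hasSum_zero

/-- exponential decay from vanishing of low coefficients -/
lemma co_decay (f : ℂ → ℂ) (hd : DifferentiableOn ℂ f {z | 0 < z.im})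
    (hp : ∀ z : ℂ, 0 < z.im → f (z + 2) = f z) (M : ℕ) (h0 : ∀ n : ℤ, n < M → co n 1 f = 0) :
    ∃ C, ∀ z : ℂ, 2 ≤ z.im → ‖f z‖ ≤ C * Real.exp (-(Real.pi * M * z.im)) := by
  have hline : ∀ y : ℝ, 0 < y → Continuous fun x : ℝ => f (x + y * I) := by
    intro y hy
    apply hd.continuousOn.comp_continuous (by fun_prop)
    intro x; simpa using hy
  have hpl : ∀ y : ℝ, 0 < y → ∀ x : ℝ, f (x + y * I + 2) = f (x + y * I) := by
    intro y hy x; apply hp; simpa using hy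
  have hind : ∀ (n : ℤ) (y : ℝ), 0 < y → co n y f = co n 1 f := by
    intro n y hy
    have hpos : ∀ t ∈ Set.uIcc y 1, 0 < t := by
      intro t ht
      exact lt_of_lt_of_le (lt_min hy one_pos) ht.1
    apply co_indep
    · intro x t ht
      exact hpl t (hpos t ht) x
    · apply hd.mono
      intro z hz
      exact hpos _ hz
  obtain ⟨C, hC⟩ := (isCompact_Icc (a := (0:ℝ)) (b := 2)).exists_bound_of_continuousOn
    (hline 1 one_pos).continuousOn
  have hC0 : 0 ≤ C := (norm_nonneg _).trans (hC 0 (by simp))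
  have hcn : ∀ n : ℤ, ‖co n 1 f‖ ≤ Real.exp (Real.pi * n) * C := by
    intro n
    simpa using co_norm n 1 f C hC
  -- the exponential terms
  have hterm : ∀ (n : ℤ) (z : ℂ), ‖co n 1 f * cexp (Real.pi * I * n * z)‖
      ≤ C * Real.exp (-(Real.pi * n * (z.im - 1))) := by
    intro n z
    rw [norm_mul, Complex.norm_exp]
    have : (Real.pi * I * n * z : ℂ).re = -(Real.pi * n * z.im) := by simp
    rw [this]
    calc _ ≤ (Real.exp (Real.pi * n) * C) * Real.exp (-(Real.pi * n * z.im)) :=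
          mul_le_mul_of_nonneg_right (hcn n) (Real.exp_pos _).le
      _ = _ := by
          rw [mul_comm _ C, mul_assoc, ← Real.exp_add]; congr 2; ring
  -- pull back to ℕ
  have hinj : Function.Injective (fun k : ℕ => (k : ℤ) + M) := by
    intro a b h; simpa using h
  have hout : ∀ (z : ℂ) (n : ℤ), n ∉ Set.range (fun k : ℕ => (k : ℤ) + M) →
      co n 1 f * cexp (Real.pi * I * n * z) = 0 := by
    intro z n hn
    rw [h0 n, zero_mul]
    by_contra h
    apply hn
    exact ⟨(n - M).toNat, by simp only; omega⟩
  have hterm2 : ∀ (z : ℂ), 2 ≤ z.im → ∀ k : ℕ,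
      ‖co ((k : ℤ) + M) 1 f * cexp (Real.pi * I * ((k : ℤ) + M : ℤ) * z)‖
      ≤ C * Real.exp (-(Real.pi * M * (z.im - 1))) * (Real.exp (-Real.pi)) ^ k := by
    intro z hz k
    refine (hterm _ z).trans ?_
    rw [mul_assoc C, ← Real.exp_nat_mul, ← Real.exp_add]
    apply mul_le_mul_of_nonneg_left _ hC0
    apply Real.exp_le_exp.mpr
    push_cast
    have h1 : 0 ≤ Real.pi * k * (z.im - 2) := by
      have := Real.pi_pos
      have : 0 ≤ z.im - 2 := by linarith
      positivity
    nlinarith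
  have hr : Real.exp (-Real.pi) < 1 := by
    rw [Real.exp_lt_one_iff]; linarith [Real.pi_pos]
  have hgeo := summable_geometric_of_lt_one (Real.exp_pos (-Real.pi)).le hr
  have hsum : ∀ z : ℂ, 2 ≤ z.im → Summable fun n : ℤ => co n 1 f * cexp (Real.pi * I * n * z) := by
    intro z hz
    rw [← hinj.summable_iff (hout z)]
    exact Summable.of_norm_bounded (hgeo.mul_left _) (hterm2 z hz)
  refine ⟨C * Real.exp (Real.pi * M) * ∑' k : ℕ, (Real.exp (-Real.pi)) ^ k, ?_⟩
  intro z hz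
  have hz0 : 0 < z.im := by linarith
  have hinv := co_inversion z.im f (hline _ hz0) (hpl _ hz0) (by
    simp only [hind _ _ hz0]
    exact hsum (z.im * I) (by simpa using hz)) z.re
  rw [Complex.re_add_im] at hinv
  simp only [hind _ _ hz0] at hinv
  rw [← hinj.hasSum_iff (hout z)] at hinv
  rw [← hinv.tsum_eq]
  refine (tsum_of_norm_bounded ((hgeo.hasSum).mul_left _) (hterm2 z hz)).trans (le_of_eq ?_)
  have : Real.exp (-(Real.pi * M * (z.im - 1))) =
      Real.exp (Real.pi * M) * Real.exp (-(Real.pi * M * z.im)) := by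
    rw [← Real.exp_add]; congr 1; ring
  rw [this]; ring

section modular

lemma eta12_T (z : ℂ) : (ModularForm.eta (z + 1)) ^ 12 = - (ModularForm.eta z) ^ 12 := by
  have h1 : ∀ n, ModularForm.eta_q n (z + 1) = ModularForm.eta_q n z := by
    intro n
    rw [ModularForm.eta_q_eq_cexp, ModularForm.eta_q_eq_cexp, Complex.exp_eq_exp_iff_exists_int]
    exact ⟨n + 1, by push_cast; ring⟩
  simp only [ModularForm.eta, h1, mul_pow, Function.Periodic.qParam, ← Complex.exp_nat_mul]
  have h2 : cexp (((12 : ℕ) : ℂ) * (2 * Real.pi * I * (z + 1) / (24 : ℝ))) =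
      - cexp (((12 : ℕ) : ℂ) * (2 * Real.pi * I * z / (24 : ℝ))) := by
    rw [← Complex.exp_add_pi_mul_I]
    congr 1
    push_cast
    ring
  rw [h2]; ring

lemma eta12_S (z : ℂ) (hz : 0 < z.im) :
    (ModularForm.eta (-1 / z)) ^ 12 = - z ^ 6 * (ModularForm.eta z) ^ 12 := by
  have hz0 : z ≠ 0 := by rintro rfl; simp at hz
  have h := ModularForm.eta_comp_eq_csqrt_I_inv (show z ∈ UpperHalfPlane.upperHalfPlaneSet from hz)
  simp only [Function.comp, Pi.smul_apply, Pi.mul_apply, smul_eq_mul] at h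
  have hsq : ∀ w : ℂ, w ≠ 0 → Complex.sqrt w ^ 12 = w ^ 6 := by
    intro w hw
    rw [_root_.sqrt_eq_exp hw, ← Complex.exp_nat_mul]
    rw [show ((12 : ℕ) : ℂ) * (Complex.log w / 2) = (6 : ℕ) * Complex.log w by push_cast; ring,
      Complex.exp_nat_mul, Complex.exp_log hw]
  rw [h, mul_pow, mul_pow, inv_pow, hsq z hz0, hsq I I_ne_zero]
  have : (I : ℂ) ^ 6 = -1 := by
    rw [show 6 = 4 + 2 by norm_num, pow_add, I_pow_four, I_sq]; ring
  rw [this]; ring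

open UpperHalfPlane ModularForm MatrixGroups in
theorem modvan (g : ℂ → ℂ) (w : ℤ) (M : ℕ) (hM : Odd M)
    (hd : DifferentiableOn ℂ g {z | 0 < z.im})
    (hT : ∀ z : ℂ, 0 < z.im → g (z + 1) = - g z)
    (hS : ∀ z : ℂ, 0 < z.im → g (-1 / z) = - z ^ w * g z)
    (h0 : ∀ n : ℤ, n < M → co n 1 g = 0) (hw : w < 6 * M ∨ w = 6 * M + 2) :
    ∀ z : ℂ, 0 < z.im → g z = 0 := by
  set f : UpperHalfPlane → ℂ := fun τ => g τ / (ModularForm.eta τ) ^ (12 * M) with hf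
  have hp : ∀ z : ℂ, 0 < z.im → g (z + 2) = g z := by
    intro z hz
    rw [show z + 2 = (z + 1) + 1 by ring, hT _ (by simpa using hz), hT z hz, neg_neg]
  obtain ⟨C, hC⟩ := co_decay g hd hp M h0
  have hfS : f ∣[(w - 6 * M : ℤ)] ModularGroup.S = f := by
    ext z
    rw [SL_slash_apply, UpperHalfPlane.modular_S_smul]
    have hz0 : (z : ℂ) ≠ 0 := z.ne_zero
    have h1 := hS z z.2
    have h2 := eta12_S z z.2
    have h3 : ((-z : ℂ)⁻¹) = -1 / (z : ℂ) := by field_simp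
    have hden : UpperHalfPlane.denom ModularGroup.S z = z := by
      exact ModularGroup.denom_S z
    rw [hden]
    simp only [hf, h3, h1, pow_mul, h2]
    rw [mul_pow, hM.neg_pow, neg_sub, zpow_sub₀ hz0, ← pow_mul]
    have he : ModularForm.eta z ≠ 0 := ModularForm.eta_ne_zero z.2
    have : (z : ℂ) ^ (6 * (M : ℤ)) = (z : ℂ) ^ (6 * M) := by
      rw [← zpow_natCast]; push_cast; rfl
    rw [this]
    field_simp
  have hfT : f ∣[(w - 6 * M : ℤ)] ModularGroup.T = f := by
    ext z
    rw [SL_slash_apply, UpperHalfPlane.modular_T_smul]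
    have hden : UpperHalfPlane.denom ModularGroup.T z = 1 := by
      rw [ModularGroup.denom_apply, ModularGroup.coe_T]; simp
    rw [hden]
    have hc : (((1 : ℝ) +ᵥ z : UpperHalfPlane) : ℂ) = z + 1 := by
      rw [UpperHalfPlane.coe_vadd]; push_cast; ring
    simp only [hf, hc, hT z z.2, pow_mul, eta12_T]
    rw [hM.neg_pow, _root_.one_zpow, mul_one, neg_div_neg_eq]
  have hbd : IsBoundedAtImInfty f := by
    rw [UpperHalfPlane.isBoundedAtImInfty_iff]
    obtain ⟨c, hc⟩ := ModularForm.exp_isBigO_discriminant.bound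
    rw [Filter.eventually_iff, UpperHalfPlane.atImInfty_mem] at hc
    obtain ⟨A, hA⟩ := hc
    have hC0 : 0 ≤ C * Real.exp (-(Real.pi * M * 2)) :=
      (norm_nonneg _).trans (by simpa using hC (2 * Complex.I) (by simp))
    have hC1 : 0 ≤ C := by
      by_contra h
      push Not at h
      nlinarith [Real.exp_pos (-(Real.pi * M * 2))]
    refine ⟨Real.sqrt (C ^ 2 * |c| ^ M), max A 2, ?_⟩
    intro z hz
    have hz1 := hA z ((le_max_left _ _).trans hz)
    have hz2 := hC z ((le_max_right _ _).trans hz)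
    simp only [Set.mem_setOf_eq] at hz1
    rw [Real.norm_of_nonneg (Real.exp_pos _).le] at hz1
    apply Real.le_sqrt_of_sq_le
    have he : ModularForm.eta z ≠ 0 := ModularForm.eta_ne_zero z.2
    have hep : 0 < ‖ModularForm.eta z‖ := norm_pos_iff.mpr he
    rw [hf]
    simp only [norm_div, norm_pow, div_pow]
    rw [div_le_iff₀ (by positivity)]
    rw [ModularForm.discriminant, norm_pow] at hz1
    have hz3 : Real.exp (-2 * Real.pi * z.im) ≤ |c| * ‖ModularForm.eta z‖ ^ 24 :=
      hz1.trans (mul_le_mul_of_nonneg_right (le_abs_self c) (by positivity))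
    calc ‖g z‖ ^ 2 ≤ (C * Real.exp (-(Real.pi * M * z.im))) ^ 2 :=
          pow_le_pow_left₀ (norm_nonneg _) hz2 2
      _ = C ^ 2 * (Real.exp (-2 * Real.pi * z.im)) ^ M := by
          rw [mul_pow, ← Real.exp_nat_mul, ← Real.exp_nat_mul]; congr 2; push_cast; ring
      _ ≤ C ^ 2 * (|c| * ‖ModularForm.eta z‖ ^ 24) ^ M := by
          apply mul_le_mul_of_nonneg_left _ (by positivity)
          exact pow_le_pow_left₀ (Real.exp_pos _).le hz3 M
      _ = _ := by rw [mul_pow, ← pow_mul, ← pow_mul]; ring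
  let fm : ModularForm 𝒮ℒ (w - 6 * M : ℤ) :=
    { toFun := f
      slash_action_eq' := by
        intro A hA
        obtain ⟨A, rfl⟩ := hA
        exact SlashInvariantForm.slash_action_generators_SL2Z hfS hfT A
      holo' := by
        rw [UpperHalfPlane.mdifferentiable_iff]
        have : DifferentiableOn ℂ (fun z => g z / (ModularForm.eta z) ^ (12 * M))
            {z | 0 < z.im} := by
          apply hd.div
          · intro z hz
            exact ((ModularForm.differentiableAt_eta_of_mem_upperHalfPlaneSet hz).pow
              _).differentiableWithinAt
          · intro z hz
            exact pow_ne_zero _ (ModularForm.eta_ne_zero hz)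
        refine this.congr ?_
        intro z hz
        simp [hf, UpperHalfPlane.ofComplex_apply_of_im_pos hz]
      bdd_at_cusps' := by
        intro c hc
        rw [Subgroup.IsArithmetic.isCusp_iff_isCusp_SL2Z] at hc
        rw [OnePoint.isBoundedAt_iff_forall_SL2Z hc]
        intro γ _
        rw [SlashInvariantForm.slash_action_generators_SL2Z hfS hfT]
        exact hbd }
  have hfz : ∀ τ, f τ = 0 := by
    rcases hw with hw | hw
    · have := ModularFormClass.levelOne_neg_weight_eq_zero (k := w - 6 * M) (by omega) fm
      intro τ; exact congrFun this τ
    · have h2 : Module.rank ℂ (ModularForm 𝒮ℒ (w - 6 * M)) = 0 := by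
        rw [hw, show (6 * (M : ℤ) + 2 - 6 * M) = 2 by ring]
        exact ModularForm.levelOne_weight_two_rank_zero
      rw [rank_zero_iff_forall_zero] at h2
      intro τ
      exact DFunLike.congr_fun (h2 fm) τ
  intro z hz
  have h := hfz ⟨z, hz⟩
  simp only [hf, div_eq_zero_iff] at h
  rcases h with h | h
  · exact h
  · exact absurd h (pow_ne_zero _ (ModularForm.eta_ne_zero hz))

end modular

/-- The Siegel half space in coordinates. -/
def DD : Set (ℂ × ℂ × ℂ) := {p | 0 < p.1.im ∧ p.2.1.im ^ 2 < p.1.im * p.2.2.im}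

lemma DD_line {y1 y y2 : ℝ} (h1 : 0 < y1) (h : y ^ 2 < y1 * y2) (x1 x x2 : ℝ) :
    ((x1 + y1 * I : ℂ), (x + y * I : ℂ), (x2 + y2 * I : ℂ)) ∈ DD := by
  constructor <;> simpa

lemma DD_isOpen : IsOpen DD := by
  have h1 : IsOpen {p : ℂ × ℂ × ℂ | 0 < p.1.im} :=
    isOpen_lt continuous_const (Complex.continuous_im.comp continuous_fst)
  have h2 : IsOpen {p : ℂ × ℂ × ℂ | p.2.1.im ^ 2 < p.1.im * p.2.2.im} :=
    isOpen_lt ((Complex.continuous_im.comp (continuous_fst.comp continuous_snd)).pow 2)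
      ((Complex.continuous_im.comp continuous_fst).mul
        (Complex.continuous_im.comp (continuous_snd.comp continuous_snd)))
  exact h1.inter h2

section core

variable {E : Type*} [NormedAddCommGroup E] [NormedSpace ℂ E] [CompleteSpace E]

/-- analytic and translation properties -/
structure Core (Φ : ℂ → ℂ → ℂ → E) (L R Nn : E →L[ℂ] E) : Prop where
  hc : ContinuousOn (fun p : ℂ × ℂ × ℂ => Φ p.1 p.2.1 p.2.2) DD
  ha : ∀ z b, DifferentiableOn ℂ (fun a => Φ a z b) {a | (a, z, b) ∈ DD}
  hz : ∀ a b, DifferentiableOn ℂ (fun z => Φ a z b) {z | (a, z, b) ∈ DD}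
  hb : ∀ a z, DifferentiableOn ℂ (fun b => Φ a z b) {b | (a, z, b) ∈ DD}
  T1 : ∀ a z b, Φ (a + 1) z b = - Φ a z b
  T2 : ∀ a z b, Φ a z (b + 1) = - Φ a z b
  T3 : ∀ a z b, Φ a (z + 1) b = - Φ a z b
  U : ∀ a z b, (a, z, b) ∈ DD → Φ (a + (2 * z + b)) (z + b) b = - L (Φ a z b)
  Sw : ∀ a z b, (a, z, b) ∈ DD → Φ b z a = R (Φ a z b)
  Ng : ∀ a z b, (a, z, b) ∈ DD → Φ a (-z) b = Nn (Φ a z b)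

def tri (Φ : ℂ → ℂ → ℂ → E) (n r m : ℤ) (y1 y y2 : ℝ) : E :=
  co m y2 (fun b => co r y (fun z => co n y1 (fun a => Φ a z b)))

lemma line_cont {Φ : ℂ → ℂ → ℂ → E}
    (hc : ContinuousOn (fun p : ℂ × ℂ × ℂ => Φ p.1 p.2.1 p.2.2) DD)
    {y1 y y2 : ℝ} (h1 : 0 < y1) (h : y ^ 2 < y1 * y2) {X : Type*} [TopologicalSpace X]
    (u v w : X → ℝ) (hu : Continuous u) (hv : Continuous v) (hw : Continuous w) :
    Continuous fun p : X => Φ (u p + y1 * I) (v p + y * I) (w p + y2 * I) := by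
  apply hc.comp_continuous
    (f := fun p : X => ((u p + y1 * I : ℂ), (v p + y * I : ℂ), (w p + y2 * I : ℂ)))
  · fun_prop
  · intro p; exact DD_line h1 h _ _ _

section tri
variable {Φ : ℂ → ℂ → ℂ → E}
    (hc : ContinuousOn (fun p : ℂ × ℂ × ℂ => Φ p.1 p.2.1 p.2.2) DD)
include hc

/-- order (b, a, z) -/
lemma tri_baz (n r m : ℤ) {y1 y y2 : ℝ} (h1 : 0 < y1) (h : y ^ 2 < y1 * y2) :
    tri Φ n r m y1 y y2 =
      co m y2 (fun b => co n y1 (fun a => co r y (fun z => Φ a z b))) := by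
  apply co_congr
  intro xb
  apply co_swap r n y y1 (fun z a => Φ a z (xb + y2 * I))
  exact line_cont hc h1 h (fun p : ℝ × ℝ => p.2) (fun p => p.1) (fun _ => xb)
    (by fun_prop) (by fun_prop) (by fun_prop)

/-- order (z, b, a) -/
lemma tri_zba (n r m : ℤ) {y1 y y2 : ℝ} (h1 : 0 < y1) (h : y ^ 2 < y1 * y2) :
    tri Φ n r m y1 y y2 =
      co r y (fun z => co m y2 (fun b => co n y1 (fun a => Φ a z b))) := by
  apply co_swap m r y2 y (fun b z => co n y1 (fun a => Φ a z b))
  apply co_cont n y1 (fun (p : ℝ × ℝ) a => Φ a (p.2 + y * I) (p.1 + y2 * I))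
  exact line_cont hc h1 h (fun p : (ℝ × ℝ) × ℝ => p.2) (fun p => p.1.2) (fun p => p.1.1)
    (by fun_prop) (by fun_prop) (by fun_prop)

/-- order (z, a, b) -/
lemma tri_zab (n r m : ℤ) {y1 y y2 : ℝ} (h1 : 0 < y1) (h : y ^ 2 < y1 * y2) :
    tri Φ n r m y1 y y2 =
      co r y (fun z => co n y1 (fun a => co m y2 (fun b => Φ a z b))) := by
  rw [tri_zba hc n r m h1 h]
  apply co_congr
  intro xz
  apply co_swap m n y2 y1 (fun b a => Φ a (xz + y * I) b)
  exact line_cont hc h1 h (fun p : ℝ × ℝ => p.2) (fun _ => xz) (fun p => p.1)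
    (by fun_prop) (by fun_prop) (by fun_prop)

/-- order (a, z, b) -/
lemma tri_azb (n r m : ℤ) {y1 y y2 : ℝ} (h1 : 0 < y1) (h : y ^ 2 < y1 * y2) :
    tri Φ n r m y1 y y2 =
      co n y1 (fun a => co r y (fun z => co m y2 (fun b => Φ a z b))) := by
  rw [tri_zab hc n r m h1 h]
  apply co_swap r n y y1 (fun z a => co m y2 (fun b => Φ a z b))
  apply co_cont m y2 (fun (p : ℝ × ℝ) b => Φ (p.2 + y1 * I) (p.1 + y * I) b)
  exact line_cont hc h1 h (fun p : (ℝ × ℝ) × ℝ => p.1.2) (fun p => p.1.1) (fun p => p.2)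
    (by fun_prop) (by fun_prop) (by fun_prop)

lemma tri_clm {E2 : Type*} [NormedAddCommGroup E2] [NormedSpace ℂ E2] [CompleteSpace E2] (L : E →L[ℂ] E2) (n r m : ℤ) {y1 y y2 : ℝ} (h1 : 0 < y1) (h : y ^ 2 < y1 * y2) :
    tri (fun a z b => L (Φ a z b)) n r m y1 y y2 = L (tri Φ n r m y1 y y2) := by
  unfold tri
  rw [← co_clm]
  · apply co_congr
    intro xb
    rw [← co_clm]
    · apply co_congr
      intro xz
      rw [← co_clm]
      exact line_cont hc h1 h (fun p : ℝ => p) (fun _ => xz) (fun p => xb)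
        (by fun_prop) (by fun_prop) (by fun_prop)
    · apply co_cont n y1 (fun (p : ℝ) a => Φ a (p + y * I) (xb + y2 * I))
      exact line_cont hc h1 h (fun p : (ℝ × ℝ) => p.2) (fun p => p.1) (fun p => xb)
        (by fun_prop) (by fun_prop) (by fun_prop)
  · apply co_cont r y (fun (p : ℝ) z => co n y1 fun a => Φ a z (p + y2 * I))
    apply co_cont n y1 (fun (p : ℝ × ℝ) a => Φ a (p.2 + y * I) (p.1 + y2 * I))
    exact line_cont hc h1 h (fun p : (ℝ × ℝ) × ℝ => p.2) (fun p => p.1.2) (fun p => p.1.1)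
      (by fun_prop) (by fun_prop) (by fun_prop)

end tri

lemma tri_congr {Φ Ψ : ℂ → ℂ → ℂ → E} {y1 y y2 : ℝ} (h1 : 0 < y1) (h : y ^ 2 < y1 * y2)
    (hh : ∀ a z b, (a, z, b) ∈ DD → Φ a z b = Ψ a z b) (n r m : ℤ) :
    tri Φ n r m y1 y y2 = tri Ψ n r m y1 y y2 := by
  unfold tri
  apply co_congr; intro xb
  apply co_congr; intro xz
  apply co_congr; intro xa
  exact hh _ _ _ (DD_line h1 h _ _ _)

variable {Φ : ℂ → ℂ → ℂ → E} {L R Nn : E →L[ℂ] E} (H : Core Φ L R Nn)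
include H

lemma Core.P1 (a z b : ℂ) : Φ (a + 2) z b = Φ a z b := by
  rw [show a + 2 = a + 1 + 1 by ring, H.T1, H.T1, neg_neg]
lemma Core.P2 (a z b : ℂ) : Φ a z (b + 2) = Φ a z b := by
  rw [show b + 2 = b + 1 + 1 by ring, H.T2, H.T2, neg_neg]
lemma Core.P3 (a z b : ℂ) : Φ a (z + 2) b = Φ a z b := by
  rw [show z + 2 = z + 1 + 1 by ring, H.T3, H.T3, neg_neg]

lemma Core.tri_y1 (n r m : ℤ) {y1 y1' y y2 : ℝ} (h1 : 0 < y1) (h : y ^ 2 < y1 * y2)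
    (h1' : 0 < y1') (h' : y ^ 2 < y1' * y2) :
    tri Φ n r m y1 y y2 = tri Φ n r m y1' y y2 := by
  apply co_congr; intro xb
  apply co_congr; intro xz
  apply co_indep
  · intro x t _; exact H.P1 _ _ _
  · apply (H.ha _ _).mono
    intro a ha
    have h2 : 0 < y2 := by
      by_contra hh
      nlinarith [sq_nonneg y]
    have h3 : min y1 y1' ≤ a.im := ha.1
    have h4 : 0 < a.im := lt_of_lt_of_le (lt_min h1 h1') h3
    refine ⟨h4, ?_⟩
    simp only [add_im, ofReal_im, mul_im, ofReal_re, I_im, mul_one, I_re, mul_zero, add_zero,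
      zero_add]
    rcases min_choice y1 y1' with hm | hm <;> rw [hm] at h3 <;> nlinarith

lemma Core.tri_y2 (n r m : ℤ) {y1 y2' y y2 : ℝ} (h1 : 0 < y1) (h : y ^ 2 < y1 * y2)
    (h' : y ^ 2 < y1 * y2') :
    tri Φ n r m y1 y y2 = tri Φ n r m y1 y y2' := by
  rw [tri_azb H.hc n r m h1 h, tri_azb H.hc n r m h1 h']
  apply co_congr; intro xb
  apply co_congr; intro xz
  apply co_indep
  · intro x t _; exact H.P2 _ _ _
  · apply (H.hb _ _).mono
    intro b hb
    have h3 : min y2 y2' ≤ b.im := hb.1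
    refine ⟨by simpa using h1, ?_⟩
    simp only [add_im, ofReal_im, mul_im, ofReal_re, I_im, mul_one, I_re, mul_zero, add_zero,
      zero_add]
    rcases min_choice y2 y2' with hm | hm <;> rw [hm] at h3 <;> nlinarith

lemma Core.tri_y (n r m : ℤ) {y1 y y2 : ℝ} (h1 : 0 < y1) (h : y ^ 2 < y1 * y2) :
    tri Φ n r m y1 y y2 = tri Φ n r m y1 0 y2 := by
  have h0 : (0:ℝ) ^ 2 < y1 * y2 := by nlinarith [sq_nonneg y]
  rw [tri_baz H.hc n r m h1 h, tri_baz H.hc n r m h1 h0]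
  apply co_congr; intro xb
  apply co_congr; intro xz
  apply co_indep
  · intro x t _; exact H.P3 _ _ _
  · apply (H.hz _ _).mono
    intro z hz
    refine ⟨by simpa using h1, ?_⟩
    simp only [add_im, ofReal_im, mul_im, ofReal_re, I_im, mul_one, I_re, mul_zero, add_zero,
      zero_add]
    have hz' : z.im ∈ Set.uIcc y 0 := hz
    have : z.im ^ 2 ≤ y ^ 2 := by
      rcases Set.mem_uIcc.mp hz' with hh | hh <;> nlinarith
    linarith

/-- The Fourier coefficients. -/
lemma Core.tri_eq (n r m : ℤ) {y1 y y2 : ℝ} (h1 : 0 < y1) (h : y ^ 2 < y1 * y2) :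
    tri Φ n r m y1 y y2 = tri Φ n r m 1 0 1 := by
  have h2 : 0 < y2 := by
    by_contra hh
    nlinarith [sq_nonneg y]
  rw [H.tri_y n r m h1 h]
  rw [H.tri_y1 n r m (y1' := 1) h1 (by nlinarith) one_pos (by nlinarith)]
  rw [H.tri_y2 n r m (y2' := 1) one_pos (by nlinarith) (by nlinarith)]

lemma Core.odd1 (n r m : ℤ) (h : Even n) : tri Φ n r m 1 0 1 = 0 := by
  unfold tri
  rw [co_congr (g := fun _ => 0), co_zero]
  intro xb
  rw [co_congr (g := fun _ => 0), co_zero]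
  intro xz
  exact co_even _ _ _ (fun x => H.T1 _ _ _) h

lemma Core.odd3 (n r m : ℤ) (h : Even r) : tri Φ n r m 1 0 1 = 0 := by
  unfold tri
  rw [co_congr (g := fun _ => 0), co_zero]
  intro xb
  refine co_even _ _ _ (fun x => ?_) h
  rw [← co_neg]
  exact co_congr fun t => H.T3 _ _ _

lemma Core.equiv (n r m : ℤ) :
    tri Φ n (r - 2 * n) (m - r + n) 1 0 1 = - L (tri Φ n r m 1 0 1) := by
  have hY : (0:ℝ) ^ 2 < 1 * 1 := by norm_num
  have e1 : tri (fun a z b => Φ (a + (2 * z + b)) (z + b) b) n r m 1 0 1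
      = - L (tri Φ n r m 1 0 1) := by
    rw [tri_congr one_pos hY (Ψ := fun a z b => (-L) (Φ a z b))]
    · exact tri_clm H.hc (-L) n r m one_pos hY
    · intro a z b h; simpa using H.U a z b h
  rw [← e1, ← H.tri_eq n (r - 2 * n) (m - r + n) (y1 := 2) (y := 1) (y2 := 1) (by norm_num)
    (by norm_num)]
  unfold tri
  symm
  have s1 : ∀ xb xz : ℝ, co n 1 (fun a => Φ (a + (2 * (xz + (0:ℝ) * I) + (xb + (1:ℝ) * I)))
        ((xz + (0:ℝ) * I) + (xb + (1:ℝ) * I)) (xb + (1:ℝ) * I)) =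
      cexp (Real.pi * I * n * (2 * (xz + (0:ℝ) * I) + (xb + (1:ℝ) * I))) •
        co n 2 (fun a => Φ a ((xz + (0:ℝ) * I) + (xb + (1:ℝ) * I)) (xb + (1:ℝ) * I)) := by
    intro xb xz
    apply co_shift n 1 2 _ (fun a => Φ a ((xz + (0:ℝ) * I) + (xb + (1:ℝ) * I)) (xb + (1:ℝ) * I))
    · simp; norm_num
    · intro x; exact H.P1 _ _ _
  have s2 : ∀ xb : ℝ, co r 0 (fun z => co n 1 (fun a => Φ (a + (2 * z + (xb + (1:ℝ) * I)))
        (z + (xb + (1:ℝ) * I)) (xb + (1:ℝ) * I))) =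
      cexp (Real.pi * I * (n + (r - 2 * n) : ℤ) * (xb + (1:ℝ) * I)) •
        co (r - 2 * n) 1 (fun z => co n 2 (fun a => Φ a z (xb + (1:ℝ) * I))) := by
    intro xb
    have t1 : co r 0 (fun z => co n 1 (fun a => Φ (a + (2 * z + (xb + (1:ℝ) * I)))
        (z + (xb + (1:ℝ) * I)) (xb + (1:ℝ) * I))) =
        co r 0 (fun z => cexp (Real.pi * I * n * (xb + (1:ℝ) * I)) •
          (cexp (Real.pi * I * (2 * n : ℤ) * z) •
          (fun z => co n 2 (fun a => Φ a z (xb + (1:ℝ) * I))) (z + (xb + (1:ℝ) * I)))) := by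
      apply co_congr
      intro xz
      rw [s1, smul_smul, ← Complex.exp_add]
      congr 2
      push_cast
      ring
    rw [t1, co_smul, co_exp r (2 * n) 0 (fun z => (fun z => co n 2 (fun a =>
      Φ a z (xb + (1:ℝ) * I))) (z + (xb + (1:ℝ) * I))),
      co_shift (r - 2 * n) 0 1 _ (fun z => co n 2 (fun a => Φ a z (xb + (1:ℝ) * I)))
      (by simp) (by intro x; exact co_congr fun t => H.P3 _ _ _), smul_smul, ← Complex.exp_add]
    congr 2
    push_cast
    ring
  refine Eq.trans (co_congr (g := fun b => cexp (Real.pi * I * (n + (r - 2 * n) : ℤ) * b) •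
        co (r - 2 * n) 1 (fun z => co n 2 (fun a => Φ a z b))) s2) ?_
  rw [co_exp m (n + (r - 2 * n)) 1 (fun b => co (r - 2 * n) 1 (fun z =>
    co n 2 (fun a => Φ a z b)))]
  congr 1
  ring

lemma Core.swap (n r m : ℤ) : tri Φ n r m 1 0 1 = R (tri Φ m r n 1 0 1) := by
  have hY : (0:ℝ) ^ 2 < 1 * 1 := by norm_num
  rw [← tri_clm H.hc R m r n one_pos hY, tri_azb H.hc n r m one_pos hY]
  unfold tri
  apply co_congr; intro xb
  apply co_congr; intro xz
  apply co_congr; intro xa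
  exact H.Sw _ _ _ (DD_line one_pos hY _ _ _)

lemma Core.negr (n r m : ℤ) : tri Φ n (-r) m 1 0 1 = Nn (tri Φ n r m 1 0 1) := by
  have hY : (0:ℝ) ^ 2 < 1 * 1 := by norm_num
  rw [← tri_clm H.hc Nn n r m one_pos hY, tri_congr one_pos hY (Φ := fun a z b => Nn (Φ a z b))
    (Ψ := fun a z b => Φ a (-z) b) (fun a z b h => (H.Ng a z b h).symm)]
  unfold tri
  apply co_congr; intro xb
  symm
  have := co_refl r 0 (fun z => co n 1 (fun a => Φ a z (xb + (1:ℝ) * I)))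
    (fun x => co_congr fun t => H.P3 _ _ _)
  simpa using this

lemma Core.equiv_iter (n r m : ℤ) (k : ℕ) :
    ‖tri Φ n r m 1 0 1‖ ≤ ‖L‖ ^ k * ‖tri Φ n (r + 2 * k * n) (m + k * r + k ^ 2 * n) 1 0 1‖ := by
  induction k with
  | zero => simp
  | succ k ih =>
    have := H.equiv n (r + 2 * (k + 1) * n) (m + (k + 1) * r + (k + 1) ^ 2 * n)
    rw [show r + 2 * (k + 1) * n - 2 * n = r + 2 * k * n by ring,
      show m + (k + 1) * r + (k + 1) ^ 2 * n - (r + 2 * (k + 1) * n) + n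
        = m + k * r + k ^ 2 * n by ring] at this
    rw [this, norm_neg] at ih
    refine ih.trans ?_
    push_cast
    rw [pow_succ ‖L‖ k, mul_assoc (‖L‖ ^ k)]
    apply mul_le_mul_of_nonneg_left _ (by positivity)
    exact L.le_opNorm _

lemma Core.bound : ∃ C, ∀ n r m : ℤ, ‖tri Φ n r m 1 0 1‖ ≤ Real.exp (Real.pi * (n + m)) * C := by
  have hY : (0:ℝ) ^ 2 < 1 * 1 := by norm_num
  have hcont : Continuous fun p : ℝ × ℝ × ℝ =>
      Φ (p.1 + (1:ℝ) * I) (p.2.1 + (0:ℝ) * I) (p.2.2 + (1:ℝ) * I) :=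
    line_cont H.hc one_pos hY _ _ _ (by fun_prop) (by fun_prop) (by fun_prop)
  obtain ⟨C, hC⟩ := ((isCompact_Icc (a := (0:ℝ)) (b := 2)).prod
    ((isCompact_Icc (a := (0:ℝ)) (b := 2)).prod (isCompact_Icc (a := (0:ℝ)) (b := 2)))
    ).exists_bound_of_continuousOn hcont.continuousOn
  refine ⟨C, fun n r m => ?_⟩
  have h := co_norm m 1 (fun b => co r 0 (fun z => co n 1 (fun a => Φ a z b)))
    (Real.exp (Real.pi * r * 0) * (Real.exp (Real.pi * n * 1) * C)) (by
      intro xb hxb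
      apply co_norm
      intro xz hxz
      apply co_norm
      intro xa hxa
      exact hC (xa, xz, xb) ⟨hxa, hxz, hxb⟩)
  unfold tri
  refine h.trans (le_of_eq ?_)
  rw [← mul_assoc, ← mul_assoc, ← Real.exp_add, ← Real.exp_add]
  congr 2
  ring

lemma Core.koecher1 (n r m : ℤ) (hn : n < 0) : tri Φ n r m 1 0 1 = 0 := by
  obtain ⟨C, hC⟩ := H.bound
  have hC0 : 0 ≤ C := by
    have := (norm_nonneg _).trans (hC 0 0 0)
    simpa using this
  have key : ∀ k : ℕ, ‖tri Φ n r m 1 0 1‖ ≤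
      C * Real.exp (Real.pi * (n + m) + k * ((‖L‖ + Real.pi * r) + -Real.pi * k)) := by
    intro k
    refine (H.equiv_iter n r m k).trans ?_
    have h1 : ‖L‖ ^ k ≤ Real.exp (k * ‖L‖) := by
      rw [Real.exp_nat_mul]
      apply pow_le_pow_left₀ (norm_nonneg _)
      linarith [Real.add_one_le_exp ‖L‖]
    refine (mul_le_mul h1 (hC _ _ _) (norm_nonneg _) (Real.exp_pos _).le).trans ?_
    rw [← mul_assoc, mul_comm C, ← Real.exp_add]
    apply mul_le_mul_of_nonneg_right _ hC0
    apply Real.exp_le_exp.mpr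
    push_cast
    have hn' : (n : ℝ) ≤ -1 := by exact_mod_cast Int.le_sub_one_of_lt hn
    have : Real.pi * (k : ℝ) ^ 2 * n ≤ Real.pi * (k : ℝ) ^ 2 * (-1) :=
      mul_le_mul_of_nonneg_left hn' (by positivity)
    nlinarith
  have hlim : Tendsto (fun k : ℕ => C * Real.exp (Real.pi * (n + m) +
      k * ((‖L‖ + Real.pi * r) + -Real.pi * k))) atTop (𝓝 (C * 0)) := by
    apply Tendsto.const_mul
    apply Real.tendsto_exp_atBot.comp
    apply tendsto_atBot_add_const_left
    apply Tendsto.atTop_mul_atBot₀ tendsto_natCast_atTop_atTop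
    apply tendsto_atBot_add_const_left
    apply Tendsto.const_mul_atTop_of_neg (by linarith [Real.pi_pos]) tendsto_natCast_atTop_atTop
  rw [mul_zero] at hlim
  have := ge_of_tendsto' hlim key
  exact norm_le_zero_iff.mp this

lemma Core.koecher2 (n r m : ℤ) (hm : m < 0) : tri Φ n r m 1 0 1 = 0 := by
  rw [H.swap, H.koecher1 _ _ _ hm, map_zero]

end core

section division

variable {E : Type*} [NormedAddCommGroup E] [NormedSpace ℂ E] [CompleteSpace E]

/-- regularity: jointly continuous, holomorphic in the first two variables -/
structure Reg (G : ℂ → ℂ → ℂ → E) : Prop where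
  hc : ContinuousOn (fun p : ℂ × ℂ × ℂ => G p.1 p.2.1 p.2.2) DD
  ha : ∀ z b, DifferentiableOn ℂ (fun a => G a z b) {a | (a, z, b) ∈ DD}
  hz : ∀ a b, DifferentiableOn ℂ (fun z => G a z b) {z | (a, z, b) ∈ DD}

lemma DD_sec_a (z b : ℂ) : IsOpen {a | (a, z, b) ∈ DD} :=
  DD_isOpen.preimage (f := fun a : ℂ => (a, z, b)) (by fun_prop)

lemma DD_sec_z (a b : ℂ) : IsOpen {z | (a, z, b) ∈ DD} :=
  DD_isOpen.preimage (f := fun z : ℂ => (a, z, b)) (by fun_prop)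

lemma DD_zero {a b : ℂ} (ha : 0 < a.im) (hb : 0 < b.im) : (a, (0:ℂ), b) ∈ DD :=
  ⟨ha, by simpa using mul_pos ha hb⟩

/-- division of `G` by `z` -/
def dv (G : ℂ → ℂ → ℂ → E) (a z b : ℂ) : E := dslope (fun z => G a z b) 0 z

lemma dv_of_ne {G : ℂ → ℂ → ℂ → E} {a z b : ℂ} (hz : z ≠ 0) (h0 : G a 0 b = 0) :
    dv G a z b = z⁻¹ • G a z b := by
  unfold dv
  rw [dslope_of_ne _ hz, slope_def_module]
  simp [h0]

variable {G : ℂ → ℂ → ℂ → E}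

lemma dv_smul (h0 : ∀ a b, (a, (0:ℂ), b) ∈ DD → G a 0 b = 0) {a z b : ℂ}
    (h : (a, z, b) ∈ DD) (hh : (a, (0:ℂ), b) ∈ DD) : G a z b = z • dv G a z b := by
  have := sub_smul_dslope (fun z => G a z b) 0 z
  simp only [sub_zero, h0 a b hh] at this
  exact this.symm

lemma DD_to_zero {a z b : ℂ} (h : (a, z, b) ∈ DD) : (a, (0:ℂ), b) ∈ DD := by
  refine ⟨h.1, ?_⟩
  have := h.2
  simp only at this ⊢
  simp only [zero_im]
  nlinarith [sq_nonneg z.im]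

lemma dv_hz (H : Reg G) (a b : ℂ) :
    DifferentiableOn ℂ (fun z => dv G a z b) {z | (a, z, b) ∈ DD} := by
  by_cases hh : (a, (0:ℂ), b) ∈ DD
  · have : {z | (a, z, b) ∈ DD} ∈ 𝓝 (0:ℂ) := (DD_sec_z a b).mem_nhds hh
    exact (Complex.differentiableOn_dslope this).mpr (H.hz a b)
  · intro z hz
    exact absurd (DD_to_zero hz) hh

lemma dv_cont_zero (H : Reg G) (h0 : ∀ a b, (a, (0:ℂ), b) ∈ DD → G a 0 b = 0) {a b : ℂ}
    (hab : (a, (0:ℂ), b) ∈ DD) :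
    ContinuousAt (fun p : ℂ × ℂ × ℂ => dv G p.1 p.2.1 p.2.2) (a, 0, b) := by
  obtain ⟨ρ, hρ, hsub⟩ : ∃ ρ > 0, Metric.closedBall (a, (0:ℂ), b) ρ ⊆ DD :=
    Metric.nhds_basis_closedBall.mem_iff.mp (DD_isOpen.mem_nhds hab)
  have hmem : ∀ a' z' b', ‖a' - a‖ ≤ ρ → ‖z'‖ ≤ ρ → ‖b' - b‖ ≤ ρ → (a', z', b') ∈ DD := by
    intro a' z' b' h1 h2 h3
    apply hsub
    rw [Metric.mem_closedBall, Prod.dist_eq, Prod.dist_eq]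
    simp only [dist_eq_norm, sub_zero]
    exact max_le h1 (max_le h2 h3)
  rw [Metric.continuousAt_iff']
  intro ε hε
  -- continuity in z alone
  have e1 : ∀ᶠ p : ℂ × ℂ × ℂ in 𝓝 (a, 0, b), ‖dv G a p.2.1 b - dv G a 0 b‖ < ε / 2 := by
    have : ContinuousAt (fun p : ℂ × ℂ × ℂ => dv G a p.2.1 b) (a, 0, b) := by
      apply ContinuousAt.comp (f := fun p : ℂ × ℂ × ℂ => p.2.1) (g := fun z => dv G a z b)
      · exact ((dv_hz H a b).differentiableAt ((DD_sec_z a b).mem_nhds hab)).continuousAt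
      · fun_prop
    have := Metric.continuousAt_iff'.mp this (ε / 2) (by linarith)
    simpa [dist_eq_norm] using this
  have e2 : ∀ᶠ q : ℂ × ℂ in 𝓝 (a, b), ∀ w ∈ Metric.sphere (0:ℂ) ρ,
      ‖G q.1 w q.2 - G a w b‖ < ε / 2 * ρ := by
    apply (isCompact_sphere (0:ℂ) ρ).eventually_forall_of_forall_eventually
    intro w hw
    have hw' : ‖w‖ = ρ := by simpa using hw
    have hin : (a, w, b) ∈ DD := hmem _ _ _ (by simpa using hρ.le) hw'.le (by simpa using hρ.le)
    have c1 : ContinuousAt (fun p : (ℂ × ℂ) × ℂ => G p.1.1 p.2 p.1.2) ((a, b), w) := by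
      apply ContinuousAt.comp (f := fun p : (ℂ × ℂ) × ℂ => (p.1.1, p.2, p.1.2))
        (g := fun p : ℂ × ℂ × ℂ => G p.1 p.2.1 p.2.2)
      · exact H.hc.continuousAt (DD_isOpen.mem_nhds hin)
      · fun_prop
    have c2 : ContinuousAt (fun p : (ℂ × ℂ) × ℂ => G a p.2 b) ((a, b), w) := by
      apply ContinuousAt.comp (f := fun p : (ℂ × ℂ) × ℂ => p.2)
        (g := fun z => G a z b)
      · exact ((H.hz a b).differentiableAt ((DD_sec_z a b).mem_nhds hin)).continuousAt
      · fun_prop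
    have := Metric.continuousAt_iff'.mp (c1.sub c2) (ε / 2 * ρ) (by positivity)
    simpa [dist_eq_norm] using this
  have e3 : ∀ᶠ p : ℂ × ℂ × ℂ in 𝓝 (a, 0, b), ∀ w ∈ Metric.sphere (0:ℂ) ρ,
      ‖G p.1 w p.2.2 - G a w b‖ < ε / 2 * ρ := by
    have : Tendsto (fun p : ℂ × ℂ × ℂ => (p.1, p.2.2)) (𝓝 (a, 0, b)) (𝓝 (a, b)) := by
      apply Continuous.tendsto' (by fun_prop)
      rfl
    exact this.eventually e2
  filter_upwards [e1, e3, Metric.closedBall_mem_nhds (a, (0:ℂ), b) hρ] with p h1 h3 h4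
  obtain ⟨a', z', b'⟩ := p
  rw [Metric.mem_closedBall, Prod.dist_eq, Prod.dist_eq] at h4
  simp only [dist_eq_norm, sub_zero, sup_le_iff] at h4
  obtain ⟨ha', hz', hb'⟩ := h4
  simp only at h1 h3
  have hdiff : DiffContOnCl ℂ (fun z => dv G a' z b' - dv G a z b) (Metric.ball 0 ρ) := by
    apply DifferentiableOn.diffContOnCl
    rw [closure_ball _ hρ.ne']
    apply DifferentiableOn.sub
    · apply (dv_hz H a' b').mono
      intro w hw
      exact hmem _ _ _ ha' (by simpa using hw) hb'
    · apply (dv_hz H a b).mono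
      intro w hw
      exact hmem _ _ _ (by simpa using hρ.le) (by simpa using hw) (by simpa using hρ.le)
  have hmax := Complex.norm_le_of_forall_mem_frontier_norm_le (Metric.isBounded_ball)
    hdiff (C := ε / 2) (z := z') (by
      intro w hw
      rw [frontier_ball _ hρ.ne'] at hw
      have hw' : ‖w‖ = ρ := by simpa using hw
      have hw0 : w ≠ 0 := by
        rintro rfl
        simp at hw'
        linarith
      have hA : (a', (0:ℂ), b') ∈ DD := hmem _ _ _ ha' (by simpa using hρ.le) hb'
      rw [dv_of_ne hw0 (h0 _ _ hA), dv_of_ne hw0 (h0 _ _ hab), ← smul_sub, norm_smul, norm_inv, hw']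
      rw [inv_mul_le_iff₀ hρ]
      linarith [h3 w hw])
    (by rw [closure_ball _ hρ.ne']; simpa using hz')
  rw [dist_eq_norm]
  calc ‖dv G a' z' b' - dv G a 0 b‖ = ‖(dv G a' z' b' - dv G a z' b) + (dv G a z' b - dv G a 0 b)‖ := by
        congr 1; abel
    _ ≤ _ := norm_add_le _ _
    _ < ε := by linarith

lemma dv_reg (H : Reg G) (h0 : ∀ a b, (a, (0:ℂ), b) ∈ DD → G a 0 b = 0) : Reg (dv G) := by
  refine ⟨?_, ?_, dv_hz H⟩
  · rintro ⟨a, z, b⟩ h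
    apply ContinuousAt.continuousWithinAt
    by_cases hz : z = 0
    · subst hz
      exact dv_cont_zero H h0 h
    · have : (fun p : ℂ × ℂ × ℂ => dv G p.1 p.2.1 p.2.2) =ᶠ[𝓝 (a, z, b)]
          fun p => p.2.1⁻¹ • G p.1 p.2.1 p.2.2 := by
        have o1 : ∀ᶠ p : ℂ × ℂ × ℂ in 𝓝 (a, z, b), p.2.1 ≠ 0 := by
          have : Continuous fun p : ℂ × ℂ × ℂ => p.2.1 := by fun_prop
          exact this.continuousAt.eventually_ne hz
        filter_upwards [o1, DD_isOpen.mem_nhds h] with p h1 h2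
        exact dv_of_ne h1 (h0 _ _ (DD_to_zero h2))
      apply ContinuousAt.congr _ this.symm
      apply ContinuousAt.smul
      · apply ContinuousAt.inv₀
        · fun_prop
        · exact hz
      · exact H.hc.continuousAt (DD_isOpen.mem_nhds h)
  · intro z b
    by_cases hz : z = 0
    · subst hz
      intro a ha
      apply DifferentiableAt.differentiableWithinAt
      obtain ⟨ρ, hρ, hsub⟩ : ∃ ρ > 0, Metric.closedBall (a, (0:ℂ), b) ρ ⊆ DD :=
        Metric.nhds_basis_closedBall.mem_iff.mp (DD_isOpen.mem_nhds ha)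
      have hmem : ∀ a' z', ‖a' - a‖ ≤ ρ → ‖z'‖ ≤ ρ → (a', z', b) ∈ DD := by
        intro a' z' h1 h2
        apply hsub
        rw [Metric.mem_closedBall, Prod.dist_eq, Prod.dist_eq]
        simp only [dist_eq_norm, sub_zero, sub_self, norm_zero]
        exact max_le h1 (max_le h2 hρ.le)
      let ζ : ℕ → ℂ := fun n => ((ρ / (n + 1) : ℝ) : ℂ)
      have hζ0 : ∀ n, ζ n ≠ 0 := by
        intro n
        simp only [ζ]
        have : ρ / ((n:ℝ) + 1) ≠ 0 := by positivity
        exact_mod_cast this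
      have hζρ : ∀ n, ‖ζ n‖ ≤ ρ := by
        intro n
        simp only [ζ, Complex.norm_real, Real.norm_eq_abs]
        rw [abs_of_nonneg (by positivity)]
        apply div_le_self hρ.le
        linarith [(Nat.cast_nonneg n : (0:ℝ) ≤ n)]
      have hζl : Tendsto ζ atTop (𝓝 0) := by
        have : Tendsto (fun n : ℕ => ρ * (1 / ((n:ℝ) + 1))) atTop (𝓝 (ρ * 0)) :=
          tendsto_one_div_add_atTop_nhds_zero_nat.const_mul ρ
        rw [mul_zero] at this
        have h2 := (Complex.continuous_ofReal.tendsto 0).comp this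
        rw [ofReal_zero] at h2
        refine h2.congr ?_
        intro n
        simp [ζ, div_eq_mul_inv]
      have hlim : TendstoLocallyUniformlyOn (fun n a => dv G a (ζ n) b) (fun a => dv G a 0 b)
          atTop (Metric.ball a ρ) := by
        rw [tendstoLocallyUniformlyOn_iff_forall_tendsto]
        intro x hx
        have hx' : (x, (0:ℂ), b) ∈ DD := hmem _ _ (by
          rw [Metric.mem_ball, dist_eq_norm] at hx; exact hx.le) (by simpa using hρ.le)
        have hcx := dv_cont_zero H h0 hx'
        have hle : 𝓝 (dv G x 0 b, dv G x 0 b) ≤ _root_.uniformity E := nhds_le_uniformity _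
        refine Tendsto.mono_right ?_ hle
        rw [nhds_prod_eq]
        apply Tendsto.prodMk
        · refine hcx.tendsto.comp (f := fun y : ℕ × ℂ => (y.2, (0:ℂ), b)) ?_
          rw [nhds_prod_eq, nhds_prod_eq]
          refine Tendsto.prodMk ?_ (Tendsto.prodMk tendsto_const_nhds tendsto_const_nhds)
          exact tendsto_snd.mono_right nhdsWithin_le_nhds
        · refine hcx.tendsto.comp (f := fun y : ℕ × ℂ => (y.2, ζ y.1, b)) ?_
          rw [nhds_prod_eq, nhds_prod_eq]
          refine Tendsto.prodMk ?_ (Tendsto.prodMk (hζl.comp tendsto_fst) tendsto_const_nhds)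
          exact tendsto_snd.mono_right nhdsWithin_le_nhds
      have := hlim.differentiableOn (Eventually.of_forall fun n => by
        have : DifferentiableOn ℂ (fun a => (ζ n)⁻¹ • G a (ζ n) b) (Metric.ball a ρ) := by
          apply DifferentiableOn.const_smul
          apply (H.ha _ _).mono
          intro x hx
          rw [Metric.mem_ball, dist_eq_norm] at hx
          exact hmem _ _ hx.le (hζρ n)
        apply this.congr
        intro x hx
        rw [Metric.mem_ball, dist_eq_norm] at hx
        exact dv_of_ne (hζ0 n) (h0 _ _ (hmem _ _ hx.le (by simpa using hρ.le)))) Metric.isOpen_ball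
      exact this.differentiableAt (Metric.ball_mem_nhds a hρ)
    · have : DifferentiableOn ℂ (fun a => z⁻¹ • G a z b) {a | (a, z, b) ∈ DD} :=
        (H.ha z b).const_smul _
      apply this.congr
      intro a ha
      exact dv_of_ne hz (h0 _ _ (DD_to_zero ha))

/-- divisibility by `z ^ N` -/
def PN (Φ : ℂ → ℂ → ℂ → E) (N : ℕ) : Prop :=
  ∃ G, Reg G ∧ ∀ a z b, (a, z, b) ∈ DD → Φ a z b = z ^ N • G a z b

lemma PN_succ {Φ : ℂ → ℂ → ℂ → E} {N : ℕ} (H : Reg G)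
    (hG : ∀ a z b, (a, z, b) ∈ DD → Φ a z b = z ^ N • G a z b)
    (h0 : ∀ a b, (a, (0:ℂ), b) ∈ DD → G a 0 b = 0) : PN Φ (N + 1) := by
  refine ⟨dv G, dv_reg H h0, ?_⟩
  intro a z b h
  rw [hG a z b h, dv_smul h0 h (DD_to_zero h), smul_smul, pow_succ]

lemma PN_all {Φ : ℂ → ℂ → ℂ → E} (H : Reg Φ) (h : ∀ N, PN Φ N) :
    ∀ a z b, (a, z, b) ∈ DD → Φ a z b = 0 := by
  intro a z b hab
  have h0 := DD_to_zero hab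
  have hopen := DD_sec_z a b
  have han : AnalyticOnNhd ℂ (fun z => Φ a z b) {z | (a, z, b) ∈ DD} :=
    (H.hz a b).analyticOnNhd hopen
  have htop : analyticOrderAt (fun z => Φ a z b) 0 = ⊤ := by
    rw [ENat.eq_top_iff_forall_ge]
    intro N
    obtain ⟨G, hG, hΦ⟩ := h N
    rw [natCast_le_analyticOrderAt (han 0 h0)]
    refine ⟨fun z => G a z b, ((hG.hz a b).analyticOnNhd hopen) 0 h0, ?_⟩
    filter_upwards [hopen.mem_nhds h0] with w hw
    rw [sub_zero]
    exact hΦ a w b hw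
  have hev := analyticOrderAt_eq_top.mp htop
  have hconv : Convex ℝ {z | (a, z, b) ∈ DD} := by
    have : {z | (a, z, b) ∈ DD} = Complex.imCLM.toLinearMap ⁻¹' {y : ℝ | |y| < √(a.im * b.im)} := by
      ext w
      constructor
      · intro hw
        have := hw.2
        simp only at this
        show |w.im| < _
        exact (Real.lt_sqrt (abs_nonneg _)).mpr (by rwa [sq_abs])
      · intro hw
        have hw' : |w.im| < √(a.im * b.im) := hw
        refine ⟨h0.1, ?_⟩
        simp only
        rw [← sq_abs]
        exact (Real.lt_sqrt (abs_nonneg _)).mp hw'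
    rw [this]
    apply Convex.linear_preimage
    have : {y : ℝ | |y| < √(a.im * b.im)} = Metric.ball 0 (√(a.im * b.im)) := by
      ext y; simp
    rw [this]
    exact convex_ball _ _
  exact han.eqOn_zero_of_preconnected_of_eventuallyEq_zero hconv.isPreconnected h0 hev hab

end division

/-- cancellation of `z ^ N` at the origin -/
lemma cancel_pow {f h : ℂ → ℂ} {N : ℕ} (hf : ContinuousAt f 0) (hh : ContinuousAt h 0)
    (e : ∀ᶠ z in 𝓝 (0:ℂ), z ^ N * f z = z ^ N * h z) : f 0 = h 0 := by
  have h1 : Tendsto f (𝓝[≠] 0) (𝓝 (f 0)) := hf.tendsto.mono_left nhdsWithin_le_nhds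
  have h2 : Tendsto h (𝓝[≠] 0) (𝓝 (h 0)) := hh.tendsto.mono_left nhdsWithin_le_nhds
  refine tendsto_nhds_unique (h1.congr' ?_) h2
  filter_upwards [nhdsWithin_le_nhds e, self_mem_nhdsWithin] with z hz hz0
  exact mul_left_cancel₀ (pow_ne_zero N hz0) hz

lemma cancel_pow_real {f : ℝ → ℂ} {N : ℕ} (hf : ContinuousAt f 0)
    (e : ∀ x : ℝ, (x:ℂ) ^ N * f x = 0) : f 0 = 0 := by
  have h1 : Tendsto f (𝓝[≠] 0) (𝓝 (f 0)) := hf.tendsto.mono_left nhdsWithin_le_nhds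
  refine tendsto_nhds_unique (h1.congr' ?_) tendsto_const_nhds
  filter_upwards [self_mem_nhdsWithin] with z hz0
  have hz : (z:ℂ) ≠ 0 := by simpa using hz0
  exact (mul_eq_zero.mp (e z)).resolve_left (pow_ne_zero N hz)

lemma poly_trig (P : Polynomial ℂ) (N : ℕ) (hdeg : P.natDegree < N) (h : ℝ → ℂ)
    (hc : ContinuousAt h 0)
    (e : ∀ x : ℝ, P.eval (cexp (2 * Real.pi * I * x)) = (x:ℂ) ^ N * h x) : P = 0 := by
  by_contra hP
  obtain ⟨Q, hQ, hQd⟩ := Polynomial.exists_eq_pow_rootMultiplicity_mul_and_not_dvd P hP 1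
  set K := P.rootMultiplicity 1 with hK
  have hKN : K < N := by
    have : K ≤ P.natDegree := by
      rw [← Polynomial.count_roots] at hK
      rw [hK]
      exact (Multiset.count_le_card _ _).trans (Polynomial.card_roots' P)
    omega
  have hQ1 : Q.eval 1 ≠ 0 := by
    intro h
    exact hQd (Polynomial.dvd_iff_isRoot.mpr h)
  have hder : HasDerivAt (fun x : ℝ => cexp (2 * Real.pi * I * x)) (2 * Real.pi * I) 0 := by
    have h1 : HasDerivAt (fun x : ℝ => (2 * Real.pi * I * (x:ℂ))) (2 * Real.pi * I * 1) 0 :=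
      (HasDerivAt.ofReal_comp (hasDerivAt_id (0:ℝ))).const_mul _
    have := h1.cexp
    simpa using this
  have hslope := hasDerivAt_iff_tendsto_slope.mp hder
  have hQc : Tendsto (fun x : ℝ => Q.eval (cexp (2 * Real.pi * I * x))) (𝓝[≠] 0) (𝓝 (Q.eval 1)) := by
    have hcc : Continuous (fun x : ℝ => Q.eval (cexp (2 * Real.pi * I * x))) :=
      Q.continuous.comp (by fun_prop)
    have := hcc.tendsto 0
    simp only [ofReal_zero, mul_zero, Complex.exp_zero] at this
    exact this.mono_left nhdsWithin_le_nhds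
  have hlim1 := (hslope.pow K).mul hQc
  have hlim2 : Tendsto (fun x : ℝ => (x:ℂ) ^ (N - K) * h x) (𝓝[≠] 0) (𝓝 0) := by
    have h1 : Tendsto (fun x : ℝ => (x:ℂ) ^ (N - K)) (𝓝[≠] 0) (𝓝 0) := by
      have hcc : Continuous (fun x : ℝ => (x:ℂ) ^ (N - K)) := by fun_prop
      have := hcc.tendsto 0
      rw [ofReal_zero, zero_pow (by omega)] at this
      exact this.mono_left nhdsWithin_le_nhds
    have := h1.mul (hc.tendsto.mono_left (nhdsWithin_le_nhds (s := {0}ᶜ)))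
    simpa using this
  have heq : (fun x : ℝ => (x:ℂ) ^ (N - K) * h x) =ᶠ[𝓝[≠] 0]
      fun x => (slope (fun x : ℝ => cexp (2 * Real.pi * I * x)) 0 x) ^ K *
        Q.eval (cexp (2 * Real.pi * I * x)) := by
    filter_upwards [self_mem_nhdsWithin] with x hx
    have hx0 : (x:ℂ) ≠ 0 := by simpa using hx
    have h1 := e x
    rw [hQ] at h1
    simp only [Polynomial.eval_mul, Polynomial.eval_pow, Polynomial.eval_sub, Polynomial.eval_X,
      Polynomial.eval_C] at h1
    rw [slope_def_module]
    simp only [ofReal_zero, mul_zero, Complex.exp_zero, sub_zero]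
    rw [Complex.real_smul, mul_pow, mul_assoc, h1]
    rw [show N = K + (N - K) by omega, pow_add, ofReal_inv, inv_pow]
    rw [show K + (N - K) - K = N - K by omega]
    field_simp
  have := tendsto_nhds_unique (hlim2.congr' heq) hlim1
  have hne : (2 * Real.pi * I : ℂ) ^ K * Q.eval 1 ≠ 0 := by
    apply mul_ne_zero _ hQ1
    apply pow_ne_zero
    simp [Real.pi_ne_zero]
  exact hne this.symm

section scalar
variable {φ : ℂ → ℂ → ℂ → ℂ}

lemma inner_cont (hc : ContinuousOn (fun p : ℂ × ℂ × ℂ => φ p.1 p.2.1 p.2.2) DD)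
    (n m : ℤ) {β : ℝ} (hβ : 0 < β) :
    Continuous fun x : ℝ => co m β (fun b => co n 1 (fun a => φ a (x + (0:ℝ) * I) b)) := by
  have hY : (0:ℝ) ^ 2 < 1 * β := by simpa using hβ
  apply co_cont m β (fun (x : ℝ) b => co n 1 (fun a => φ a (x + (0:ℝ) * I) b))
  apply co_cont n 1 (fun (p : ℝ × ℝ) a => φ a (p.1 + (0:ℝ) * I) (p.2 + β * I))
  exact line_cont hc one_pos hY (fun p : (ℝ × ℝ) × ℝ => p.2) (fun p => p.1.1) (fun p => p.1.2)
    (by fun_prop) (by fun_prop) (by fun_prop)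

lemma inner_zero (hc : ContinuousOn (fun p : ℂ × ℂ × ℂ => φ p.1 p.2.1 p.2.2) DD)
    (hP : ∀ a z b, φ a (z + 2) b = φ a z b) (n m : ℤ) {β : ℝ} (hβ : 0 < β)
    (h : ∀ r, tri φ n r m 1 0 β = 0) (x : ℝ) :
    co m β (fun b => co n 1 (fun a => φ a (x + (0:ℝ) * I) b)) = 0 := by
  have hY : (0:ℝ) ^ 2 < 1 * β := by simpa using hβ
  refine co_all_zero 0 (fun z => co m β (fun b => co n 1 (fun a => φ a z b))) ?_ ?_ ?_ x
  · exact inner_cont hc n m hβ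
  · intro t
    apply co_congr; intro xb
    apply co_congr; intro xa
    exact hP _ _ _
  · intro r
    rw [← tri_zba hc n r m one_pos hY]
    exact h r

lemma inner_pow {G : ℂ → ℂ → ℂ → ℂ} {N : ℕ}
    (hG : ∀ a z b, (a, z, b) ∈ DD → φ a z b = z ^ N * G a z b) (n m : ℤ) {β : ℝ} (hβ : 0 < β)
    (x : ℝ) : co m β (fun b => co n 1 (fun a => φ a (x + (0:ℝ) * I) b)) =
      (x:ℂ) ^ N * co m β (fun b => co n 1 (fun a => G a (x + (0:ℝ) * I) b)) := by
  have hY : (0:ℝ) ^ 2 < 1 * β := by simpa using hβ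
  refine Eq.trans ?_ (co_smul m β ((x:ℂ) ^ N) _)
  apply co_congr; intro xb
  rw [← co_smul]
  apply co_congr; intro xa
  rw [hG _ _ _ (DD_line one_pos hY _ _ _), smul_eq_mul]
  simp

/-- vanishing of the "middle" coefficients -/
lemma middle_zero (hc : ContinuousOn (fun p : ℂ × ℂ × ℂ => φ p.1 p.2.1 p.2.2) DD)
    (hP : ∀ a z b, φ a (z + 2) b = φ a z b) {G : ℂ → ℂ → ℂ → ℂ} {N : ℕ}
    (hGc : ContinuousOn (fun p : ℂ × ℂ × ℂ => G p.1 p.2.1 p.2.2) DD)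
    (hG : ∀ a z b, (a, z, b) ∈ DD → φ a z b = z ^ N * G a z b)
    (n : ℕ) (hn : Odd n) (hnN : n < N) (m : ℤ)
    (h1 : ∀ r : ℤ, (n:ℤ) < |r| → tri φ n r m 1 0 1 = 0)
    (h2 : ∀ r : ℤ, Even r → tri φ n r m 1 0 1 = 0) (r : ℤ) : tri φ n r m 1 0 1 = 0 := by
  have hY : (0:ℝ) ^ 2 < 1 * 1 := by norm_num
  set f : ℂ → ℂ := fun z => co m 1 (fun b => co n 1 (fun a => φ a z b)) with hf
  have hco : ∀ r, co r 0 f = tri φ n r m 1 0 1 := fun r => (tri_zba hc n r m one_pos hY).symm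
  set P : Polynomial ℂ := ∑ k ∈ Finset.range (n + 1),
    Polynomial.monomial k (tri φ n (2 * k - n) m 1 0 1) with hP0
  have hcoef : ∀ k < n + 1, P.coeff k = tri φ n (2 * k - n) m 1 0 1 := by
    intro k hk
    simp only [hP0, Polynomial.finset_sum_coeff, Polynomial.coeff_monomial]
    rw [Finset.sum_ite_eq' ]
    simp [hk]
  -- the expansion
  have hsupp : ∀ s ∉ (Finset.range (n + 1)).image (fun k : ℕ => (2 * k - n : ℤ)),
      tri φ n s m 1 0 1 = 0 := by
    intro s hs
    by_cases he : Even s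
    · exact h2 s he
    · apply h1
      by_contra hcon
      apply hs
      rw [not_lt, abs_le] at hcon
      have ho := Int.not_even_iff_odd.mp he
      obtain ⟨u, hu⟩ := ho
      obtain ⟨v, hv⟩ := hn
      rw [Finset.mem_image]
      refine ⟨((s + n) / 2).toNat, ?_, ?_⟩
      · rw [Finset.mem_range]; omega
      · omega
  have hinv : ∀ x : ℝ, f (x + (0:ℝ) * I) = ∑ k ∈ Finset.range (n + 1),
      tri φ n (2 * k - n) m 1 0 1 * cexp (Real.pi * I * (2 * k - n : ℤ) * (x + (0:ℝ) * I)) := by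
    intro x
    have hs : Summable fun s : ℤ => co s 0 f * cexp (Real.pi * I * s * ((0:ℝ) * I)) := by
      apply summable_of_ne_finset_zero
        (s := (Finset.range (n + 1)).image (fun k : ℕ => (2 * k - n : ℤ)))
      intro s hs
      rw [hco, hsupp s hs, zero_mul]
    have H1 := co_inversion 0 f (inner_cont hc n m one_pos) (by
      intro t
      apply co_congr; intro xb
      apply co_congr; intro xa
      exact hP _ _ _) hs x
    have H2 := hasSum_sum_of_ne_finset_zero (L := SummationFilter.unconditional ℤ)
      (f := fun s : ℤ => co s 0 f * cexp (Real.pi * I * s * (x + (0:ℝ) * I)))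
      (s := (Finset.range (n + 1)).image (fun k : ℕ => (2 * k - n : ℤ))) (by
        intro s hs
        rw [hco, hsupp s hs, zero_mul])
    rw [H1.unique H2, Finset.sum_image]
    · apply Finset.sum_congr rfl
      intro k _
      rw [hco]
    · intro k _ k' _ hkk
      simp only at hkk
      omega
  have hPz : P = 0 := by
    apply poly_trig P N ?_ (fun x => cexp (Real.pi * I * n * x) *
      co m 1 (fun b => co n 1 (fun a => G a (x + (0:ℝ) * I) b))) ?_ ?_
    · refine lt_of_le_of_lt ?_ hnN
      apply Polynomial.natDegree_sum_le_of_forall_le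
      intro k hk
      refine (Polynomial.natDegree_monomial_le _).trans ?_
      rw [Finset.mem_range] at hk
      omega
    · exact ((by fun_prop : Continuous fun x : ℝ => cexp (Real.pi * I * n * x)).mul
        (inner_cont hGc n m one_pos)).continuousAt
    · intro x
      rw [mul_left_comm, ← inner_pow hG n m one_pos x]
      have := hinv x
      simp only [hf] at this
      rw [this, hP0, Polynomial.eval_finset_sum, Finset.mul_sum]
      apply Finset.sum_congr rfl
      intro k _
      rw [Polynomial.eval_monomial, mul_left_comm, ← Complex.exp_add, ← Complex.exp_nat_mul]
      congr 2
      push_cast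
      ring
  by_cases hr : r ∈ (Finset.range (n + 1)).image (fun k : ℕ => (2 * k - n : ℤ))
  · rw [Finset.mem_image] at hr
    obtain ⟨k, hk, rfl⟩ := hr
    rw [← hcoef k (Finset.mem_range.mp hk), hPz, Polynomial.coeff_zero]
  · exact hsupp r hr

end scalar

section V
variable {j : ℕ} {Φ : ℂ → ℂ → ℂ → (Fin (j + 1) → ℂ)}
  {L R Nn : (Fin (j + 1) → ℂ) →L[ℂ] (Fin (j + 1) → ℂ)}

lemma tri_apply (hc : ContinuousOn (fun p : ℂ × ℂ × ℂ => Φ p.1 p.2.1 p.2.2) DD) (i : Fin (j + 1))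
    (n r m : ℤ) {y1 y y2 : ℝ} (h1 : 0 < y1) (h : y ^ 2 < y1 * y2) :
    tri (fun a z b => Φ a z b i) n r m y1 y y2 = tri Φ n r m y1 y y2 i :=
  tri_clm hc (ContinuousLinearMap.proj (R := ℂ) i) n r m h1 h

lemma cont_apply (hc : ContinuousOn (fun p : ℂ × ℂ × ℂ => Φ p.1 p.2.1 p.2.2) DD) (i : Fin (j + 1)) :
    ContinuousOn (fun p : ℂ × ℂ × ℂ => Φ p.1 p.2.1 p.2.2 i) DD :=
  (continuous_apply i).comp_continuousOn hc

lemma V_zero (H : Core Φ L R Nn) {G : ℂ → ℂ → ℂ → (Fin (j + 1) → ℂ)} {N : ℕ}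
    (hGc : ContinuousOn (fun p : ℂ × ℂ × ℂ => G p.1 p.2.1 p.2.2) DD)
    (hG : ∀ a z b, (a, z, b) ∈ DD → Φ a z b = z ^ N • G a z b)
    (n : ℕ) (hn : Odd n) (hnN : n < N) : ∀ k : ℕ, ∀ m : ℤ, m < k → ∀ r, tri Φ n r m 1 0 1 = 0 := by
  intro k
  induction k with
  | zero => intro m hm r; exact H.koecher2 _ _ _ (by simpa using hm)
  | succ k ih =>
    intro m hm r
    have hneg : ∀ r : ℤ, r < -n → tri Φ n r m 1 0 1 = 0 := by
      intro r hr
      have h := H.equiv n (r + 2 * n) (m + r + n)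
      rw [show r + 2 * (n:ℤ) - 2 * n = r by ring,
        show m + r + (n:ℤ) - (r + 2 * n) + n = m by ring,
        ih (m + r + n) (by push_cast at hm; omega), map_zero, neg_zero] at h
      exact h
    have hbig : ∀ r : ℤ, (n:ℤ) < |r| → tri Φ n r m 1 0 1 = 0 := by
      intro r hr
      rcases lt_abs.mp hr with h | h
      · have := H.negr n (-r) m
        rw [neg_neg, hneg (-r) (by omega), map_zero] at this
        exact this
      · exact hneg r (by omega)
    have hY : (0:ℝ) ^ 2 < 1 * 1 := by norm_num
    funext i
    rw [← tri_apply H.hc i n r m one_pos hY]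
    apply middle_zero (φ := fun a z b => Φ a z b i) (G := fun a z b => G a z b i) (cont_apply H.hc i) (fun a z b => by rw [H.P3]) (cont_apply hGc i) (N := N) ?_
      n hn hnN m ?_ ?_ r
    · intro a z b h
      rw [hG a z b h]; rfl
    · intro r hr
      rw [tri_apply H.hc i n r m one_pos hY, hbig r hr]; rfl
    · intro r hr
      rw [tri_apply H.hc i n r m one_pos hY, H.odd3 n r m hr]; rfl

/-- the coefficient of the restriction vanishes below `N` -/
lemma low_zero (H : Core Φ L R Nn) {G : ℂ → ℂ → ℂ → (Fin (j + 1) → ℂ)} {N : ℕ}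
    (hGc : ContinuousOn (fun p : ℂ × ℂ × ℂ => G p.1 p.2.1 p.2.2) DD)
    (hG : ∀ a z b, (a, z, b) ∈ DD → Φ a z b = z ^ N • G a z b)
    (n : ℤ) (hn : Even n ∨ n < N) (r m : ℤ) : tri Φ n r m 1 0 1 = 0 := by
  rcases Int.even_or_odd n with h | h
  · exact H.odd1 n r m h
  · have hnN : n < N := by
      rcases hn with h' | h'
      · exact absurd h' (Int.not_even_iff_odd.mpr h)
      · exact h'
    rcases lt_or_ge n 0 with h0 | h0
    · exact H.koecher1 n r m h0
    · lift n to ℕ using h0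
      apply V_zero H hGc hG n (by exact_mod_cast h) (by exact_mod_cast hnN) (m + 1).toNat m
      omega

end V

lemma lin14 (q : ℕ → ℂ) (hr : ∀ i ≤ 14, q i = - q (14 - i))
    (he : ∀ i ≤ 14, (-1) ^ i * q i = -∑ l ∈ Finset.range 15,
      (if l ≤ i then (-1) ^ (i - l) * ((14 - l).choose (i - l) : ℂ) else 0) * q l)
    (h0 : q 0 = 0) (h2 : q 2 = 0) (h6 : q 6 = 0) : ∀ i ≤ 14, q i = 0 := by
  have e2 := he 2 (by norm_num)
  have e4 := he 4 (by norm_num)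
  have e6 := he 6 (by norm_num)
  have e8 := he 8 (by norm_num)
  have r7 := hr 7 (by norm_num)
  have r8 := hr 8 (by norm_num)
  norm_num [Finset.sum_range_succ, Nat.choose, h0, h2, h6] at e2 e4 e6 e8 r8
  rw [r8] at e8
  norm_num [h6] at e8
  have z7 : q 7 = 0 := by
    norm_num at r7
    linear_combination (1/2) * r7
  have z1 : q 1 = 0 := e2
  rw [z7] at e8
  simp only [z1] at e4 e6 e8
  have z3 : q 3 = 0 := by
    linear_combination (-15/11) * e4 + (4/33) * e6 + (-1/77) * e8
  have z4 : q 4 = 0 := by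
    linear_combination (-7) * e4 + (2/3) * e6 + (-1/14) * e8
  have z5 : q 5 = 0 := by
    linear_combination (-10) * e4 + (1) * e6 + (-5/42) * e8
  have low : ∀ i ≤ 7, q i = 0 := by
    intro i hi
    interval_cases i <;> assumption
  intro i hi
  rcases le_total i 7 with h | h
  · exact low i h
  · rw [hr i hi, low (14 - i) (by omega), neg_zero]

lemma lin16 (q : ℕ → ℂ) (hr : ∀ i ≤ 16, q i = - q (16 - i))
    (he : ∀ i ≤ 16, (-1) ^ i * q i = -∑ l ∈ Finset.range 17,
      (if l ≤ i then (-1) ^ (i - l) * ((16 - l).choose (i - l) : ℂ) else 0) * q l)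
    (h0 : q 0 = 0) (h2 : q 2 = 0) (h6 : q 6 = 0) : ∀ i ≤ 16, q i = 0 := by
  have e2 := he 2 (by norm_num)
  have e4 := he 4 (by norm_num)
  have e6 := he 6 (by norm_num)
  have e8 := he 8 (by norm_num)
  have e10 := he 10 (by norm_num)
  have r8 := hr 8 (by norm_num)
  have r9 := hr 9 (by norm_num)
  have r10 := hr 10 (by norm_num)
  have z8 : q 8 = 0 := by
    norm_num at r8
    linear_combination (1/2) * r8
  norm_num [h6] at r9 r10
  norm_num [Finset.sum_range_succ, Nat.choose, h0, h2, h6, z8, r9, r10] at e2 e4 e6 e8 e10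
  have z1 : q 1 = 0 := e2
  simp only [z1] at e4 e6 e8 e10
  have z3 : q 3 = 0 := by
    linear_combination (-651/65)*e4 + (518/715)*e6 + (-14/195)*e8 + (6/715)*e10
  have z4 : q 4 = 0 := by
    linear_combination (-323/5)*e4 + (259/55)*e6 + (-7/15)*e8 + (3/55)*e10
  have z5 : q 5 = 0 := by
    linear_combination (-636/5)*e4 + (513/55)*e6 + (-14/15)*e8 + (6/55)*e10
  have z7 : q 7 = 0 := by
    linear_combination (1056/5)*e4 + (-78/5)*e6 + (8/5)*e8 + (-1/5)*e10
  have low : ∀ i ≤ 8, q i = 0 := by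
    intro i hi
    interval_cases i <;> assumption
  intro i hi
  rcases le_total i 8 with h | h
  · exact low i h
  · rw [hr i hi, low (16 - i) (by omega), neg_zero]

/-- all the laws needed -/
structure Full (j : ℕ) (Φ : ℂ → ℂ → ℂ → (Fin (j + 1) → ℂ))
    (L R Nn : (Fin (j + 1) → ℂ) →L[ℂ] (Fin (j + 1) → ℂ)) : Prop where
  core : Core Φ L R Nn
  hR : ∀ v i, R v i = - v (Fin.rev i)
  hN : ∀ v i, Nn v i = (-1) ^ (i:ℕ) * v i
  hL : ∀ v i, L v i = ∑ l : Fin (j + 1), (if (l:ℕ) ≤ i then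
    (-1) ^ ((i:ℕ) - l) * ((j - l).choose ((i:ℕ) - l) : ℂ) else 0) * v l
  hS : ∀ a z b, (a, z, b) ∈ DD → ∀ i, Φ (-1 / a) (z / a) (b - z ^ 2 / a) i =
    -(a ^ 2 * ∑ l : Fin (j + 1), a ^ (j - l) * (((l:ℕ).choose i : ℂ) * z ^ ((l:ℕ) - i)) * Φ a z b l)

section restrict
variable {j : ℕ} {Φ G : ℂ → ℂ → ℂ → (Fin (j + 1) → ℂ)}
  {L R Nn : (Fin (j + 1) → ℂ) →L[ℂ] (Fin (j + 1) → ℂ)} {N : ℕ}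

lemma Reg.path (hG : Reg G) {p q r : ℂ → ℂ} (hp : ContinuousAt p 0) (hq : ContinuousAt q 0)
    (hr : ContinuousAt r 0) (h : (p 0, q 0, r 0) ∈ DD) (i : Fin (j + 1)) :
    ContinuousAt (fun z => G (p z) (q z) (r z) i) 0 := by
  have h1 : ContinuousAt (fun x : ℂ × ℂ × ℂ => G x.1 x.2.1 x.2.2 i) (p 0, q 0, r 0) :=
    (cont_apply hG.hc i).continuousAt (DD_isOpen.mem_nhds h)
  exact ContinuousAt.comp (f := fun z => (p z, q z, r z)) (x := (0:ℂ)) h1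
    (hp.prodMk (hq.prodMk hr))

lemma path_ev {p q r : ℂ → ℂ} (hp : ContinuousAt p 0) (hq : ContinuousAt q 0)
    (hr : ContinuousAt r 0) (h : (p 0, q 0, r 0) ∈ DD) :
    ∀ᶠ z in 𝓝 (0:ℂ), (p z, q z, r z) ∈ DD := by
  have h1 : ContinuousAt (fun z => (p z, q z, r z)) 0 := hp.prodMk (hq.prodMk hr)
  exact h1.eventually (DD_isOpen.mem_nhds h)

lemma im_neg_one_div {a : ℂ} (ha : 0 < a.im) : 0 < (-1 / a).im := by
  have : a ≠ 0 := by rintro rfl; simp at ha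
  have h2 : 0 < normSq a := normSq_pos.mpr this
  rw [neg_div, one_div, neg_im, Complex.inv_im]
  rw [neg_div, neg_neg]
  positivity

variable (H : Full j Φ L R Nn) (hG : Reg G)
  (hΦ : ∀ a z b, (a, z, b) ∈ DD → Φ a z b = z ^ N • G a z b)
include H hG hΦ

lemma gT1 {a b : ℂ} (ha : 0 < a.im) (hb : 0 < b.im) (i : Fin (j + 1)) :
    G (a + 1) 0 b i = - G a 0 b i := by
  have d1 : (a, (0:ℂ), b) ∈ DD := DD_zero ha hb
  have d2 : (a + 1, (0:ℂ), b) ∈ DD := DD_zero (by simpa using ha) hb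
  refine cancel_pow (f := fun z => G (a + 1) z b i) (h := fun z => - G a z b i) (N := N)
    (hG.path (p := fun _ => a + 1) (q := fun z => z) (r := fun _ => b)
      (by fun_prop) (by fun_prop) (by fun_prop) d2 i)
    (hG.path (p := fun _ => a) (q := fun z => z) (r := fun _ => b)
      (by fun_prop) (by fun_prop) (by fun_prop) d1 i).neg ?_
  filter_upwards [path_ev (p := fun _ => a + 1) (q := fun z => z) (r := fun _ => b)
      (by fun_prop) (by fun_prop) (by fun_prop) d2,
    path_ev (p := fun _ => a) (q := fun z => z) (r := fun _ => b)
      (by fun_prop) (by fun_prop) (by fun_prop) d1] with z h2 h1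
  have e1 := congrFun (hΦ _ _ _ h1) i
  have e2 := congrFun (hΦ _ _ _ h2) i
  rw [H.core.T1] at e2
  simp only [Pi.smul_apply, Pi.neg_apply, smul_eq_mul] at e1 e2
  rw [← e2, e1]; ring

lemma gT2 {a b : ℂ} (ha : 0 < a.im) (hb : 0 < b.im) (i : Fin (j + 1)) :
    G a 0 (b + 1) i = - G a 0 b i := by
  have d1 : (a, (0:ℂ), b) ∈ DD := DD_zero ha hb
  have d2 : (a, (0:ℂ), b + 1) ∈ DD := DD_zero ha (by simpa using hb)
  refine cancel_pow (f := fun z => G a z (b + 1) i) (h := fun z => - G a z b i) (N := N)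
    (hG.path (p := fun _ => a) (q := fun z => z) (r := fun _ => b + 1)
      (by fun_prop) (by fun_prop) (by fun_prop) d2 i)
    (hG.path (p := fun _ => a) (q := fun z => z) (r := fun _ => b)
      (by fun_prop) (by fun_prop) (by fun_prop) d1 i).neg ?_
  filter_upwards [path_ev (p := fun _ => a) (q := fun z => z) (r := fun _ => b + 1)
      (by fun_prop) (by fun_prop) (by fun_prop) d2,
    path_ev (p := fun _ => a) (q := fun z => z) (r := fun _ => b)
      (by fun_prop) (by fun_prop) (by fun_prop) d1] with z h2 h1
  have e1 := congrFun (hΦ _ _ _ h1) i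
  have e2 := congrFun (hΦ _ _ _ h2) i
  rw [H.core.T2] at e2
  simp only [Pi.smul_apply, Pi.neg_apply, smul_eq_mul] at e1 e2
  rw [← e2, e1]; ring

lemma gSw {a b : ℂ} (ha : 0 < a.im) (hb : 0 < b.im) (i : Fin (j + 1)) :
    G b 0 a i = - G a 0 b (Fin.rev i) := by
  have d1 : (a, (0:ℂ), b) ∈ DD := DD_zero ha hb
  have d2 : (b, (0:ℂ), a) ∈ DD := DD_zero hb ha
  refine cancel_pow (f := fun z => G b z a i) (h := fun z => - G a z b (Fin.rev i)) (N := N)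
    (hG.path (p := fun _ => b) (q := fun z => z) (r := fun _ => a)
      (by fun_prop) (by fun_prop) (by fun_prop) d2 i)
    (hG.path (p := fun _ => a) (q := fun z => z) (r := fun _ => b)
      (by fun_prop) (by fun_prop) (by fun_prop) d1 _).neg ?_
  filter_upwards [path_ev (p := fun _ => b) (q := fun z => z) (r := fun _ => a)
      (by fun_prop) (by fun_prop) (by fun_prop) d2,
    path_ev (p := fun _ => a) (q := fun z => z) (r := fun _ => b)
      (by fun_prop) (by fun_prop) (by fun_prop) d1] with z h2 h1
  have e1 := congrFun (hΦ _ _ _ h1) (Fin.rev i)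
  have e2 := congrFun (hΦ _ _ _ h2) i
  rw [H.core.Sw _ _ _ h1, H.hR] at e2
  simp only [Pi.smul_apply, smul_eq_mul] at e1 e2
  rw [← e2, e1]; ring

lemma gS {a b : ℂ} (ha : 0 < a.im) (hb : 0 < b.im) (i : Fin (j + 1)) :
    G (-1 / a) 0 b i = - a ^ (2 + N + (j - i)) * G a 0 b i := by
  have ha0 : a ≠ 0 := by rintro rfl; simp at ha
  have d1 : (a, (0:ℂ), b) ∈ DD := DD_zero ha hb
  have d2 : (-1 / a, (0:ℂ), b) ∈ DD := DD_zero (im_neg_one_div ha) hb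
  have d3 : (-1 / a, (0:ℂ) / a, b - (0:ℂ) ^ 2 / a) ∈ DD := by simpa using d2
  have hf := hG.path (p := fun _ => -1 / a) (q := fun z => z / a) (r := fun z => b - z ^ 2 / a)
      (by fun_prop) (by fun_prop) (by fun_prop) d3 i
  have hh : ContinuousAt (fun z => -(a ^ N * a ^ 2 * ∑ l : Fin (j + 1),
      a ^ (j - l) * (((l:ℕ).choose i : ℂ) * z ^ ((l:ℕ) - i)) * G a z b l)) 0 := by
    apply ContinuousAt.neg
    apply ContinuousAt.mul continuousAt_const
    apply tendsto_finset_sum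
    intro l _
    apply ContinuousAt.mul (by fun_prop)
    exact hG.path (p := fun _ => a) (q := fun z => z) (r := fun _ => b)
      (by fun_prop) (by fun_prop) (by fun_prop) d1 l
  have key := cancel_pow (N := N) hf hh ?_
  · simp only [zero_div, ne_eq, OfNat.ofNat_ne_zero, not_false_eq_true, zero_pow, sub_zero] at key
    rw [key, Finset.sum_eq_single i]
    · simp only [Nat.choose_self, Nat.cast_one, tsub_self, pow_zero]
      ring
    · intro l _ hl
      rcases lt_or_gt_of_ne hl with h | h
      · rw [Nat.choose_eq_zero_of_lt h]; simp
      · rw [zero_pow (by have : (i:ℕ) < l := h; omega)]; simp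
    · simp
  · filter_upwards [path_ev (p := fun _ => -1 / a) (q := fun z => z / a)
      (r := fun z => b - z ^ 2 / a) (by fun_prop) (by fun_prop) (by fun_prop) d3,
      path_ev (p := fun _ => a) (q := fun z => z) (r := fun _ => b)
      (by fun_prop) (by fun_prop) (by fun_prop) d1] with z h2 h1
    have e2 := congrFun (hΦ _ _ _ h2) i
    rw [H.hS _ _ _ h1] at e2
    rw [hΦ _ _ _ h1] at e2
    simp only [Pi.smul_apply, smul_eq_mul, div_pow] at e2
    have e3 : z ^ N * G (-1 / a) (z / a) (b - z ^ 2 / a) i =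
        a ^ N * (z ^ N / a ^ N * G (-1 / a) (z / a) (b - z ^ 2 / a) i) := by
      field_simp
    rw [e3, ← e2, mul_neg, mul_neg, Finset.mul_sum, Finset.mul_sum, Finset.mul_sum, Finset.mul_sum]
    congr 1
    apply Finset.sum_congr rfl
    intro l _
    ring

omit H hΦ in
lemma gd {b : ℂ} (hb : 0 < b.im) (i : Fin (j + 1)) :
    DifferentiableOn ℂ (fun a => G a 0 b i) {a | 0 < a.im} := by
  have h := (hG.ha 0 b).mono (s := {a : ℂ | 0 < a.im}) (fun a ha => DD_zero ha hb)
  exact differentiableOn_pi.mp h i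

lemma inner_G_zero (n m : ℤ) {β : ℝ} (hβ : 0 < β) (h : ∀ r, tri Φ n r m 1 0 1 = 0)
    (i : Fin (j + 1)) : co m β (fun b => co n 1 (fun a => G a 0 b i)) = 0 := by
  have hY : (0:ℝ) ^ 2 < 1 * β := by simpa using hβ
  have h1 := inner_zero (φ := fun a z b => Φ a z b i) (cont_apply H.core.hc i)
    (fun a z b => by rw [H.core.P3]) n m hβ (by
      intro r
      rw [tri_apply H.core.hc i n r m one_pos hY, H.core.tri_eq n r m one_pos hY, h r]; rfl)
  have h2 := inner_pow (φ := fun a z b => Φ a z b i) (G := fun a z b => G a z b i) (N := N)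
    (fun a z b hd => by rw [hΦ a z b hd]; rfl) n m hβ
  have h3 := cancel_pow_real (N := N)
    (inner_cont (φ := fun a z b => G a z b i) (cont_apply hG.hc i) n m hβ).continuousAt
    (fun x => by rw [← h2 x, h1 x])
  simpa using h3

omit H hΦ in
lemma gline {a0 b0 : ℝ} (ha : 0 < a0) (hb : 0 < b0) (i : Fin (j + 1)) :
    Continuous fun p : ℝ × ℝ => G (p.1 + a0 * I) 0 (p.2 + b0 * I) i := by
  have := line_cont (Φ := fun a z b => G a z b i) (cont_apply hG.hc i) (y := 0) ha
    (by simpa using mul_pos ha hb) (fun p : ℝ × ℝ => p.1) (fun _ => 0) (fun p => p.2)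
    (by fun_prop) (by fun_prop) (by fun_prop)
  simpa using this

lemma glow (n : ℤ) (hn : Even n ∨ n < N) {b : ℂ} (hb : 0 < b.im) (i : Fin (j + 1)) :
    co n 1 (fun a => G a 0 b i) = 0 := by
  have := co_all_zero b.im (fun b => co n 1 (fun a => G a 0 b i)) (by
      apply co_cont n 1 (fun (x:ℝ) a => G a 0 (x + b.im * I) i)
      exact (gline hG one_pos hb i).comp (by fun_prop : Continuous fun p : ℝ × ℝ => (p.2, p.1)))
    (by
      intro x
      apply co_congr
      intro xa
      have hx : 0 < ((x:ℂ) + b.im * I).im := by simpa using hb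
      have hxa : 0 < ((xa:ℂ) + (1:ℝ) * I).im := by simp
      rw [show (x:ℂ) + b.im * I + 2 = x + b.im * I + 1 + 1 by ring,
        gT2 H hG hΦ hxa (by simpa using hb), gT2 H hG hΦ hxa hx, neg_neg])
    (fun m => inner_G_zero H hG hΦ n m hb (fun r => low_zero H.core hG.hc hΦ n hn r m) i) b.re
  rwa [re_add_im] at this

lemma g_van1 {M : ℕ} (hM : Odd M) (hMN : M ≤ N + 1) (i : Fin (j + 1))
    (hw : (2 + N + (j - i) : ℤ) < 6 * M ∨ (2 + N + (j - i) : ℤ) = 6 * M + 2)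
    {a b : ℂ} (ha : 0 < a.im) (hb : 0 < b.im) : G a 0 b i = 0 := by
  refine modvan (fun a => G a 0 b i) (2 + N + (j - i) : ℤ) M hM (gd hG hb i)
    (fun z hz => gT1 H hG hΦ hz hb i) ?_ ?_ hw a ha
  · intro z hz
    have := gS H hG hΦ hz hb i
    rw [this, ← zpow_natCast]
    congr 3
    have : (i:ℕ) ≤ j := by omega
    push_cast [Nat.cast_sub this]
    ring
  · intro n hn
    apply glow H hG hΦ n _ hb
    by_cases h : n < N
    · exact Or.inr h
    · left
      obtain ⟨k, hk⟩ := hM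
      exact ⟨k, by omega⟩

lemma g_van2 {M : ℕ} (hM : Odd M) (hMN : M ≤ N + 1) (i : Fin (j + 1))
    (hw : (2 + N + i : ℤ) < 6 * M ∨ (2 + N + i : ℤ) = 6 * M + 2)
    {a b : ℂ} (ha : 0 < a.im) (hb : 0 < b.im) : G a 0 b i = 0 := by
  rw [gSw H hG hΦ hb ha, g_van1 H hG hΦ hM hMN (Fin.rev i) _ hb ha, neg_zero]
  have : (i:ℕ) ≤ j := by omega
  rw [Fin.val_rev]
  push_cast [Nat.sub_add_cancel, show j + 1 - (i + 1) = j - (i:ℕ) by omega, Nat.cast_sub this]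
  rwa [show (2 + N + (j - (j - i)) : ℤ) = 2 + N + i by ring]

end restrict

lemma modvan3 (g : ℂ → ℂ) (w : ℤ) (hw : w < 18) (hd : DifferentiableOn ℂ g {z | 0 < z.im})
    (hT : ∀ z : ℂ, 0 < z.im → g (z + 1) = - g z)
    (hS : ∀ z : ℂ, 0 < z.im → g (-1 / z) = - z ^ w * g z)
    (hl : ∀ n : ℤ, n < 1 → co n 1 g = 0) (h1 : co 1 1 g = 0) : ∀ z : ℂ, 0 < z.im → g z = 0 := by
  refine modvan g w 3 (by decide) hd hT hS ?_ (Or.inl (by norm_num; omega))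
  intro n hn
  rcases lt_or_ge n 1 with h | h
  · exact hl n h
  · have : n = 1 ∨ n = 2 := by push_cast at hn; omega
    rcases this with rfl | rfl
    · exact h1
    · exact co_even 2 1 g (fun x => hT _ (by simp)) (by decide)

lemma rank_one (g : ℂ → ℂ → ℂ) (w1 w2 : ℤ) (hw1 : w1 < 18) (hw2 : w2 < 18)
    (hd1 : ∀ b : ℂ, 0 < b.im → DifferentiableOn ℂ (fun a => g a b) {z | 0 < z.im})
    (hT1 : ∀ a b : ℂ, 0 < a.im → 0 < b.im → g (a + 1) b = - g a b)
    (hS1 : ∀ a b : ℂ, 0 < a.im → 0 < b.im → g (-1 / a) b = - a ^ w1 * g a b)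
    (hl1 : ∀ b : ℂ, 0 < b.im → ∀ n : ℤ, n < 1 → co n 1 (fun a => g a b) = 0)
    (hd2 : ∀ a : ℂ, 0 < a.im → DifferentiableOn ℂ (fun b => g a b) {z | 0 < z.im})
    (hT2 : ∀ a b : ℂ, 0 < a.im → 0 < b.im → g a (b + 1) = - g a b)
    (hS2 : ∀ a b : ℂ, 0 < a.im → 0 < b.im → g a (-1 / b) = - b ^ w2 * g a b)
    (hl2 : ∀ a : ℂ, 0 < a.im → ∀ n : ℤ, n < 1 → co n 1 (fun b => g a b) = 0)
    (h11 : co 1 1 (fun b => co 1 1 (fun a => g a b)) = 0) :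
    ∀ a b : ℂ, 0 < a.im → 0 < b.im → g a b = 0 := by
  by_contra hcon
  push Not at hcon
  obtain ⟨a0, b0, ha0, hb0, hne⟩ := hcon
  have hline : ∀ b : ℂ, 0 < b.im → Continuous fun x : ℝ => g (x + (1:ℝ) * I) b := by
    intro b hb
    apply (hd1 b hb).continuousOn.comp_continuous (by fun_prop)
    intro x; simp
  set ℓ := co 1 1 (fun a => g a b0) with hℓ
  have hℓ0 : ℓ ≠ 0 := by
    intro h
    exact hne (modvan3 _ w1 hw1 (hd1 b0 hb0) (fun z hz => hT1 z b0 hz hb0)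
      (fun z hz => hS1 z b0 hz hb0) (hl1 b0 hb0) h a0 ha0)
  have key : ∀ b : ℂ, 0 < b.im → ℓ * g a0 b = g a0 b0 * co 1 1 (fun a => g a b) := by
    intro b hb
    have hco : ∀ n, co n 1 (fun a => ℓ * g a b - co 1 1 (fun a => g a b) * g a b0) =
        ℓ * co n 1 (fun a => g a b) - co 1 1 (fun a => g a b) * co n 1 (fun a => g a b0) := by
      intro n
      rw [co_sub n 1 (fun a => ℓ * g a b) (fun a => co 1 1 (fun a => g a b) * g a b0)
        (continuous_const.mul (hline b hb)) (continuous_const.mul (hline b0 hb0))]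
      congr 1
      · exact co_smul n 1 ℓ _
      · exact co_smul n 1 (co 1 1 (fun a => g a b)) _
    have := modvan3 (fun a => ℓ * g a b - co 1 1 (fun a => g a b) * g a b0) w1 hw1
      (((hd1 b hb).const_mul _).sub ((hd1 b0 hb0).const_mul _))
      (fun z hz => by simp only [hT1 z b hz hb, hT1 z b0 hz hb0]; ring)
      (fun z hz => by simp only [hS1 z b hz hb, hS1 z b0 hz hb0]; ring)
      (fun n hn => by rw [hco, hl1 b hb n hn, hl1 b0 hb0 n hn]; ring)
      (by rw [hco, ← hℓ]; ring) a0 ha0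
    linear_combination this
  have h2 : co 1 1 (fun b => g a0 b) = 0 := by
    have e1 : ℓ * co 1 1 (fun b => g a0 b) = co 1 1 (fun b => ℓ * g a0 b) :=
      (co_smul 1 1 ℓ _).symm
    have e2 : co 1 1 (fun b => ℓ * g a0 b) =
        co 1 1 (fun b => g a0 b0 • co 1 1 (fun a => g a b)) :=
      co_congr fun x => key _ (by simp)
    rw [e2, co_smul, h11, smul_zero] at e1
    exact (mul_eq_zero.mp e1).resolve_left hℓ0
  exact hne (modvan3 _ w2 hw2 (hd2 a0 ha0) (fun z hz => hT2 a0 z ha0 hz)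
      (fun z hz => hS2 a0 z ha0 hz) (hl2 a0 ha0) h2 b0 hb0)

/-- two term expansion -/
lemma two_terms {φ : ℂ → ℂ → ℂ → ℂ}
    (hc : ContinuousOn (fun p : ℂ × ℂ × ℂ => φ p.1 p.2.1 p.2.2) DD)
    (hP : ∀ a z b, φ a (z + 2) b = φ a z b)
    (h : ∀ r : ℤ, r ≠ 1 → r ≠ -1 → tri φ 1 r 1 1 0 1 = 0) :
    co 1 1 (fun b => co 1 1 (fun a => φ a 0 b)) = tri φ 1 1 1 1 0 1 + tri φ 1 (-1) 1 1 0 1 := by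
  have hY : (0:ℝ) ^ 2 < 1 * 1 := by norm_num
  set f : ℂ → ℂ := fun z => co 1 1 (fun b => co 1 1 (fun a => φ a z b)) with hf
  have hco : ∀ r, co r 0 f = tri φ 1 r 1 1 0 1 := fun r => (tri_zba hc 1 r 1 one_pos hY).symm
  have hsupp : ∀ s ∉ ({1, -1} : Finset ℤ), tri φ 1 s 1 1 0 1 = 0 := by
    intro s hs
    simp only [Finset.mem_insert, Finset.mem_singleton, not_or] at hs
    exact h s hs.1 hs.2
  have hs : Summable fun s : ℤ => co s 0 f * cexp (Real.pi * I * s * ((0:ℝ) * I)) := by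
    apply summable_of_ne_finset_zero (s := ({1, -1} : Finset ℤ))
    intro s hs
    rw [hco, hsupp s hs, zero_mul]
  have H1 := co_inversion 0 f (inner_cont hc 1 1 one_pos) (by
    intro t
    apply co_congr; intro xb
    apply co_congr; intro xa
    exact hP _ _ _) hs 0
  have H2 := hasSum_sum_of_ne_finset_zero (L := SummationFilter.unconditional ℤ)
    (f := fun s : ℤ => co s 0 f * cexp (Real.pi * I * s * ((0:ℝ) + (0:ℝ) * I)))
    (s := ({1, -1} : Finset ℤ)) (by
      intro s hs
      rw [hco, hsupp s hs, zero_mul])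
  have := H1.unique H2
  rw [Finset.sum_pair (by decide), hco, hco] at this
  simpa using this

section final
variable {j : ℕ} {Φ : ℂ → ℂ → ℂ → (Fin (j + 1) → ℂ)}
  {L R Nn : (Fin (j + 1) → ℂ) →L[ℂ] (Fin (j + 1) → ℂ)}

lemma DD_im {a b : ℂ} (h : (a, (0:ℂ), b) ∈ DD) : 0 < a.im ∧ 0 < b.im := by
  refine ⟨h.1, ?_⟩
  have h1 := h.1
  have h2 := h.2
  simp only [zero_im] at h1 h2
  by_contra hh
  nlinarith

lemma Core.reg (H : Core Φ L R Nn) : Reg Φ := ⟨H.hc, H.ha, H.hz⟩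

lemma p_zero (H : Full j Φ L R Nn) (hj : 6 ≤ j)
    (hlin : ∀ q : ℕ → ℂ, (∀ i ≤ j, q i = - q (j - i)) →
      (∀ i ≤ j, (-1) ^ i * q i = -∑ l ∈ Finset.range (j + 1),
        (if l ≤ i then (-1) ^ (i - l) * ((j - l).choose (i - l) : ℂ) else 0) * q l) →
      q 0 = 0 → q 2 = 0 → q 6 = 0 → ∀ i ≤ j, q i = 0) (r : ℤ) : tri Φ 1 r 1 1 0 1 = 0 := by
  have hY : (0:ℝ) ^ 2 < 1 * 1 := by norm_num
  have hneg : ∀ r : ℤ, r < -2 → tri Φ 1 r 1 1 0 1 = 0 := by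
    intro r hr
    have h := H.core.equiv 1 (r + 2) (r + 2)
    rw [show r + 2 - 2 * 1 = r by ring, show r + 2 - (r + 2) + 1 = 1 by ring,
      H.core.koecher2 1 (r + 2) (r + 2) (by omega), map_zero, neg_zero] at h
    exact h
  have hpos : ∀ r : ℤ, 2 < r → tri Φ 1 r 1 1 0 1 = 0 := by
    intro r hr
    have := H.core.negr 1 (-r) 1
    rw [neg_neg, hneg (-r) (by omega), map_zero] at this
    exact this
  have hother : ∀ r : ℤ, r ≠ 1 → r ≠ -1 → tri Φ 1 r 1 1 0 1 = 0 := by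
    intro r h1 h2
    rcases lt_or_ge r (-2) with h | h
    · exact hneg r h
    rcases lt_or_ge 2 r with h' | h'
    · exact hpos r h'
    · apply H.core.odd3
      have : r = -2 ∨ r = 0 ∨ r = 2 := by omega
      rcases this with rfl | rfl | rfl <;> decide
  set p := tri Φ 1 1 1 1 0 1 with hp
  have hm1 : tri Φ 1 (-1) 1 1 0 1 = Nn p := H.core.negr 1 1 1
  have heq : Nn p = - L p := by
    have := H.core.equiv 1 1 1
    rw [show (1:ℤ) - 2 * 1 = -1 by norm_num, show (1:ℤ) - 1 + 1 = 1 by norm_num, hm1] at this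
    exact this
  have hsw : p = R p := H.core.swap 1 1 1
  have hzero : ∀ i : Fin (j + 1), Even (i:ℕ) → (i:ℕ) < 4 ∨ (i:ℕ) = 6 → p i = 0 := by
    intro i hi hi2
    have e1 := two_terms (φ := fun a z b => Φ a z b i) (cont_apply H.core.hc i)
      (fun a z b => by rw [H.core.P3]) (fun r h1 h2 => by
        rw [tri_apply H.core.hc i 1 r 1 one_pos hY, hother r h1 h2]; rfl)
    rw [tri_apply H.core.hc i 1 _ 1 one_pos hY, tri_apply H.core.hc i 1 _ 1 one_pos hY, hm1, H.hN,
      hi.neg_one_pow] at e1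
    have e2 : co 1 1 (fun b => co 1 1 (fun a => Φ a 0 b i)) = 0 := by
      rw [co_congr (g := fun _ => 0), co_zero]
      intro x
      rw [co_congr (g := fun _ => 0), co_zero]
      intro y
      refine g_van2 (N := 0) H H.core.reg (fun a z b _ => by simp) (M := 1) (by decide)
        (by norm_num) i ?_ (by simp) (by simp)
      push_cast
      omega
    rw [e2] at e1
    linear_combination (-1/2) * e1
  have hp0 : p = 0 := by
    set q : ℕ → ℂ := fun n => if h : n < j + 1 then p ⟨n, h⟩ else 0 with hq
    have hqv : ∀ n (h : n < j + 1), q n = p ⟨n, h⟩ := by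
      intro n h
      exact dif_pos h
    have := hlin q ?_ ?_ ?_ ?_ ?_
    · funext i
      have h2 := this i (by omega)
      rwa [hqv i (by omega)] at h2
    · intro i hi
      rw [hqv i (by omega), hqv (j - i) (by omega)]
      have h3 := congrFun hsw ⟨i, by omega⟩
      rw [H.hR] at h3
      rw [h3]
      congr 2
      ext
      simp [Fin.val_rev]
    · intro i hi
      have h3 := congrFun heq ⟨i, by omega⟩
      rw [H.hN, Pi.neg_apply, H.hL] at h3
      rw [hqv i (by omega), h3, ← Fin.sum_univ_eq_sum_range (fun l => (if l ≤ i then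
        (-1) ^ (i - l) * ((j - l).choose (i - l) : ℂ) else 0) * q l)]
      congr 1
      apply Finset.sum_congr rfl
      intro l _
      rw [hqv l l.2]
    · rw [hqv 0 (by omega)]; exact hzero _ (by simp) (by simp)
    · rw [hqv 2 (by omega)]; exact hzero _ (by simp) (by simp)
    · rw [hqv 6 (by omega)]; exact hzero _ (show Even 6 by decide) (by simp)
  by_cases h1 : r = 1
  · rw [h1, ← hp, hp0]
  by_cases h2 : r = -1
  · rw [h2, hm1, hp0, map_zero]
  exact hother r h1 h2

theorem Full.zero (H : Full j Φ L R Nn) (hj : 6 ≤ j) (hj2 : j ≤ 16)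
    (hlin : ∀ q : ℕ → ℂ, (∀ i ≤ j, q i = - q (j - i)) →
      (∀ i ≤ j, (-1) ^ i * q i = -∑ l ∈ Finset.range (j + 1),
        (if l ≤ i then (-1) ^ (i - l) * ((j - l).choose (i - l) : ℂ) else 0) * q l) →
      q 0 = 0 → q 2 = 0 → q 6 = 0 → ∀ i ≤ j, q i = 0) :
    ∀ a z b, (a, z, b) ∈ DD → Φ a z b = 0 := by
  apply PN_all H.core.reg
  intro N
  induction N with
  | zero => exact ⟨Φ, H.core.reg, fun a z b _ => by simp⟩
  | succ N ih =>
    obtain ⟨G, hG, hΦ⟩ := ih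
    apply PN_succ hG hΦ
    intro a b hab
    obtain ⟨ha, hb⟩ := DD_im hab
    funext i
    rw [Pi.zero_apply]
    have hij : (i:ℕ) ≤ j := by omega
    by_cases hN : 2 ≤ N
    · obtain ⟨M, hM, hM1, hM2⟩ : ∃ M, Odd M ∧ M ≤ N + 1 ∧ 4 + 2 * N + j < 12 * M := by
        rcases Nat.even_or_odd N with h | h
        · exact ⟨N + 1, h.add_one, le_rfl, by omega⟩
        · refine ⟨N, h, by omega, ?_⟩
          obtain ⟨k, hk⟩ := h
          omega
      by_cases hw : (2 + N + (j - i) : ℤ) < 6 * M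
      · exact g_van1 H hG hΦ hM hM1 i (Or.inl hw) ha hb
      · exact g_van2 H hG hΦ hM hM1 i (Or.inl (by omega)) ha hb
    by_cases hw1 : (2 + N + (j - i) : ℤ) < 6
    · exact g_van1 H hG hΦ (M := 1) (by decide) (by omega) i (Or.inl (by simpa using hw1)) ha hb
    by_cases hw2 : (2 + N + i : ℤ) < 6
    · exact g_van2 H hG hΦ (M := 1) (by decide) (by omega) i (Or.inl (by simpa using hw2)) ha hb
    have hlow : ∀ n : ℤ, n < 1 → Even n ∨ n < N := by
      intro n hn
      by_cases h0 : n = 0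
      · left; rw [h0]; decide
      · right; omega
    have hgs : ∀ (i : Fin (j + 1)) (a b : ℂ), 0 < a.im → 0 < b.im →
        G (-1 / a) 0 b i = - a ^ (2 + N + (j - i) : ℤ) * G a 0 b i := by
      intro i a b ha hb
      rw [gS H hG hΦ ha hb i, ← zpow_natCast]
      congr 3
      have : (i:ℕ) ≤ j := by omega
      push_cast [Nat.cast_sub this]
      ring
    have hsw : ∀ a b : ℂ, 0 < a.im → 0 < b.im → G a 0 b i = - G b 0 a (Fin.rev i) :=
      fun a b ha hb => gSw H hG hΦ hb ha i
    have hrev : (j - (Fin.rev i : Fin (j + 1)) : ℤ) = i := by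
      rw [Fin.val_rev]
      omega
    refine rank_one (fun a b => G a 0 b i) (2 + N + (j - i) : ℤ) (2 + N + i : ℤ) (by omega)
      (by omega) (fun b hb => gd hG hb i) (fun a b ha hb => gT1 H hG hΦ ha hb i)
      (fun a b ha hb => hgs i a b ha hb) (fun b hb n hn => glow H hG hΦ n (hlow n hn) hb i)
      ?_ (fun a b ha hb => gT2 H hG hΦ ha hb i) ?_ ?_ ?_ a b ha hb
    · intro a ha
      apply (gd hG ha (Fin.rev i)).neg.congr
      intro b hb
      exact hsw a b ha hb
    · intro a b ha hb
      rw [hsw a b ha hb, hsw a _ ha (im_neg_one_div hb), hgs _ _ _ hb ha, hrev]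
      ring
    · intro a ha n hn
      have h1 : co n 1 (fun b => G a 0 b i) = co n 1 (fun b => - G b 0 a (Fin.rev i)) :=
        co_congr fun x => hsw _ _ ha (by simp)
      rw [h1, co_neg, glow H hG hΦ n (hlow n hn) ha, neg_zero]
    · exact inner_G_zero H hG hΦ 1 1 one_pos (p_zero H hj hlin) i

end final

open scoped MatrixGroups in
def i13 (g : SL(2,ℤ)) : Matrix (Fin 4) (Fin 4) ℤ :=
  !![g 0 0, 0, g 0 1, 0; 0, 1, 0, 0; g 1 0, 0, g 1 1, 0; 0, 0, 0, 1]
open scoped MatrixGroups in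
def i24 (g : SL(2,ℤ)) : Matrix (Fin 4) (Fin 4) ℤ :=
  !![1, 0, 0, 0; 0, g 0 0, 0, g 0 1; 0, 0, 1, 0; 0, g 1 0, 0, g 1 1]
open scoped MatrixGroups in
def iu (g : SL(2,ℤ)) : Matrix (Fin 4) (Fin 4) ℤ :=
  !![g 0 0, g 0 1, 0, 0; g 1 0, g 1 1, 0, 0; 0, 0, g 1 1, -g 1 0; 0, 0, -g 0 1, g 0 0]

open scoped MatrixGroups in
lemma sl_det (g : SL(2,ℤ)) : g 0 0 * g 1 1 - g 0 1 * g 1 0 = 1 := by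
  have := g.2; rw [Matrix.det_fin_two] at this; exact this

open scoped MatrixGroups in
lemma i13_mem (g : SL(2,ℤ)) : i13 g ∈ Sp4Z := by
  have h := sl_det g
  show _ = _
  ext i j
  fin_cases i <;> fin_cases j <;>
    simp [i13, J4, Matrix.mul_apply, Fin.sum_univ_four] <;> linarith
open scoped MatrixGroups in
lemma i24_mem (g : SL(2,ℤ)) : i24 g ∈ Sp4Z := by
  have h := sl_det g
  show _ = _
  ext i j
  fin_cases i <;> fin_cases j <;>
    simp [i24, J4, Matrix.mul_apply, Fin.sum_univ_four] <;> linarith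
open scoped MatrixGroups in
lemma iu_mem (g : SL(2,ℤ)) : iu g ∈ Sp4Z := by
  have h := sl_det g
  show _ = _
  ext i j
  fin_cases i <;> fin_cases j <;>
    simp [iu, J4, Matrix.mul_apply, Fin.sum_univ_four] <;> linarith

open scoped MatrixGroups in
lemma i13_mul (g h : SL(2,ℤ)) : i13 (g*h) = i13 g * i13 h := by
  ext i j
  fin_cases i <;> fin_cases j <;>
    simp [i13, Matrix.mul_apply, Fin.sum_univ_four, Fin.sum_univ_two]
open scoped MatrixGroups in
lemma i24_mul (g h : SL(2,ℤ)) : i24 (g*h) = i24 g * i24 h := by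
  ext i j
  fin_cases i <;> fin_cases j <;>
    simp [i24, Matrix.mul_apply, Fin.sum_univ_four, Fin.sum_univ_two]
open scoped MatrixGroups in
lemma iu_mul (g h : SL(2,ℤ)) : iu (g*h) = iu g * iu h := by
  ext i j
  fin_cases i <;> fin_cases j <;>
    simp [iu, Matrix.mul_apply, Fin.sum_univ_four, Fin.sum_univ_two] <;> ring

lemma i13_one : i13 1 = 1 := by decide
lemma i24_one : i24 1 = 1 := by decide
lemma iu_one : iu 1 = 1 := by decide

lemma Sp4Z_mul {g h : Matrix (Fin 4) (Fin 4) ℤ} (hg : g ∈ Sp4Z) (hh : h ∈ Sp4Z) : g * h ∈ Sp4Z := by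
  have hg' : gᵀ * J4 * g = J4 := hg
  have hh' : hᵀ * J4 * h = J4 := hh
  show (g*h)ᵀ * J4 * (g*h) = J4
  rw [Matrix.transpose_mul]
  calc hᵀ * gᵀ * J4 * (g * h) = hᵀ * (gᵀ * J4 * g) * h := by simp only [Matrix.mul_assoc]
    _ = J4 := by rw [hg', hh']

lemma Sp4Z_one : (1 : Matrix (Fin 4) (Fin 4) ℤ) ∈ Sp4Z := by
  show _ = _
  simp

section epsv
variable {ε : Matrix (Fin 4) (Fin 4) ℤ → ℂ}

lemma eps_sq (hε : IsEps ε) {g} (hg : g ∈ Sp4Z) : ε g * ε g = 1 := by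
  rcases hε.1 g hg with h | h <;> rw [h] <;> norm_num
lemma eps_ne (hε : IsEps ε) {g} (hg : g ∈ Sp4Z) : ε g ≠ 0 := by
  rcases hε.1 g hg with h | h <;> rw [h] <;> norm_num
lemma eps_one (hε : IsEps ε) : ε 1 = 1 := by
  have := hε.2.1 1 Sp4Z_one 1 Sp4Z_one
  rw [mul_one, eps_sq hε Sp4Z_one] at this
  exact this
lemma eps_conj (hε : IsEps ε) {g h k} (hg : g ∈ Sp4Z) (hh : h ∈ Sp4Z) (hk : k ∈ Sp4Z)
    (e : g * h = k * g) : ε h = ε k := by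
  have h1 := hε.2.1 g hg h hh
  have h2 := hε.2.1 k hk g hg
  rw [e, h2, mul_comm] at h1
  exact (mul_left_cancel₀ (eps_ne hε hg) h1).symm

open scoped MatrixGroups in
def epsHom (hε : IsEps ε) (φ : SL(2,ℤ) → Matrix (Fin 4) (Fin 4) ℤ) (hm : ∀ g, φ g ∈ Sp4Z)
    (h1 : φ 1 = 1) (hmul : ∀ g h, φ (g*h) = φ g * φ h) : SL(2,ℤ) →* ℂ where
  toFun g := ε (φ g)
  map_one' := by rw [h1, eps_one hε]
  map_mul' g h := by rw [hmul, hε.2.1 _ (hm g) _ (hm h)]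

open scoped MatrixGroups in
lemma hom_S (f : SL(2,ℤ) →* ℂ) (hf : ∀ g, f g * f g = 1) : f ModularGroup.S = f ModularGroup.T := by
  have e : ModularGroup.S * ModularGroup.T * ModularGroup.S * ModularGroup.T * ModularGroup.S * ModularGroup.T = ModularGroup.S * ModularGroup.S := by decide
  have := congrArg f e
  simp only [map_mul] at this
  have hS := hf ModularGroup.S
  have hT := hf ModularGroup.T
  generalize f ModularGroup.S = x at *
  generalize f ModularGroup.T = y at *
  have h3 : x * y = 1 := by
    linear_combination this + hS - (x*y*x*y- 1 ) * x * y + (x*y)*(x*y*x*y - 1) - (x*y)*(y*y)*hS - (x*y)*hT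
  linear_combination (-y) * h3 * 0 + x * hT * (-1) + y * h3

open scoped MatrixGroups in
lemma hom_triv (f : SL(2,ℤ) →* ℂ) (hf : ∀ g, f g * f g = 1) (hT : f ModularGroup.T = 1) (g) : f g = 1 := by
  have : f = 1 := by
    apply MonoidHom.eq_of_eqOn_dense SpecialLinearGroup.SL2Z_generators
    rintro x (rfl | rfl)
    · rw [hom_S f hf, hT]; rfl
    · rw [hT]; rfl
  rw [this]; rfl

def tsh (c : ℤ) : Matrix (Fin 4) (Fin 4) ℤ := !![1,0,0,c; 0,1,c,0; 0,0,1,0; 0,0,0,1]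
def ta (c : ℤ) : Matrix (Fin 4) (Fin 4) ℤ := !![1,0,c,0; 0,1,0,0; 0,0,1,0; 0,0,0,1]
def tb (c : ℤ) : Matrix (Fin 4) (Fin 4) ℤ := !![1,0,0,0; 0,1,0,c; 0,0,1,0; 0,0,0,1]
def tall (c : ℤ) : Matrix (Fin 4) (Fin 4) ℤ := !![1,0,c,c; 0,1,c,c; 0,0,1,0; 0,0,0,1]

open scoped MatrixGroups in
def slT (c : ℤ) : SL(2,ℤ) := ⟨!![1,c;0,1], by simp [Matrix.det_fin_two]⟩
open scoped MatrixGroups in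
def slL (c : ℤ) : SL(2,ℤ) := ⟨!![1,0;c,1], by simp [Matrix.det_fin_two]⟩

lemma ta_eq (c : ℤ) : ta c = i13 (slT c) := rfl
lemma tb_eq (c : ℤ) : tb c = i24 (slT c) := rfl
lemma tsh_mem (c : ℤ) : tsh c ∈ Sp4Z := by
  show _ = _
  ext i j
  fin_cases i <;> fin_cases j <;>
    simp [tsh, J4, Matrix.mul_apply, Fin.sum_univ_four]
lemma tall_mem (c : ℤ) : tall c ∈ Sp4Z := by
  show _ = _
  ext i j
  fin_cases i <;> fin_cases j <;>
    simp [tall, J4, Matrix.mul_apply, Fin.sum_univ_four]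
lemma tall_conj (c : ℤ) : iu (slL 1) * ta c = tall c * iu (slL 1) := by
  ext i j
  fin_cases i <;> fin_cases j <;>
    simp [tall, iu, ta, slL, Matrix.mul_apply, Fin.sum_univ_four]
lemma tall_eq (c : ℤ) : tall c = tsh c * (ta c * tb c) := by
  ext i j
  fin_cases i <;> fin_cases j <;>
    simp [tall, tsh, ta, tb, Matrix.mul_apply, Fin.sum_univ_four]

lemma ta_mem (c : ℤ) : ta c ∈ Sp4Z := ta_eq c ▸ i13_mem _
lemma tb_mem (c : ℤ) : tb c ∈ Sp4Z := tb_eq c ▸ i24_mem _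

lemma eps_tsh (hε : IsEps ε) (c : ℤ) : ε (tsh c) = ε (tb c) := by
  have h1 := eps_conj hε (iu_mem (slL 1)) (ta_mem c) (tall_mem c) (tall_conj c)
  rw [tall_eq, hε.2.1 _ (tsh_mem c) _ (Sp4Z_mul (ta_mem c) (tb_mem c)),
    hε.2.1 _ (ta_mem c) _ (tb_mem c)] at h1
  have h2 := eps_sq hε (ta_mem c)
  have h3 := eps_sq hε (tb_mem c)
  have h4 := eps_ne hε (ta_mem c)
  apply mul_left_cancel₀ h4
  linear_combination (ε (tb c)) * (-h1) - ε (ta c) * ε (tsh c) * h3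

open scoped MatrixGroups in
lemma eps_i24 (hε : IsEps ε) (g : SL(2,ℤ)) : ε (i24 g) = ε (i13 g) := by
  refine (eps_conj hε (iu_mem ModularGroup.S) (i13_mem g) (i24_mem g) ?_).symm
  ext i j
  fin_cases i <;> fin_cases j <;>
    simp [iu, i13, i24, ModularGroup.S, Matrix.mul_apply, Fin.sum_univ_four]

lemma eps_iuT (hε : IsEps ε) : ε (iu ModularGroup.T) = ε (i13 ModularGroup.T) := by
  have h1 : ε (iu ModularGroup.T) = ε (tsh 1) := by
    refine eps_conj hε (i24_mem ModularGroup.S) (iu_mem _) (tsh_mem 1) ?_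
    decide
  rw [h1, eps_tsh hε, tb_eq, eps_i24 hε]
  rfl

open scoped MatrixGroups in
lemma col_red (x y : ℤ) : ∃ g : SL(2,ℤ), g 1 0 * x + g 1 1 * y = 0 := by
  by_cases h : Int.gcd x y = 0
  · rw [Int.gcd_eq_zero_iff] at h
    exact ⟨1, by simp [h.1, h.2]⟩
  · obtain ⟨m, n, hc, hx, hy⟩ := Int.exists_gcd_one (Nat.pos_of_ne_zero h)
    have hco : IsCoprime (-n) m := (Int.isCoprime_iff_gcd_eq_one.mpr hc).symm.neg_left
    obtain ⟨g, h0, h1⟩ := hco.exists_SL2_row 1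
    refine ⟨g, ?_⟩
    rw [h0, h1]
    linear_combination (-n) * hx + m * hy

lemma eps_triv (hε : IsEps ε) (hs : ε (i13 ModularGroup.T) = 1) (γ) (hγ : γ ∈ Sp4Z) : ε γ = 1 := by
  have e13 : ∀ g, ε (i13 g) = 1 := hom_triv (epsHom hε i13 i13_mem i13_one i13_mul)
    (fun g => eps_sq hε (i13_mem g)) hs
  have e24 : ∀ g, ε (i24 g) = 1 := fun g => by rw [eps_i24 hε, e13]
  have eu : ∀ g, ε (iu g) = 1 := hom_triv (epsHom hε iu iu_mem iu_one iu_mul)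
    (fun g => eps_sq hε (iu_mem g)) ((eps_iuT hε).trans hs)
  have esh : ∀ c, ε (tsh c) = 1 := fun c => by rw [eps_tsh hε, tb_eq, e24]
  have red : ∀ g ∈ Sp4Z, ε g = 1 → ∀ γ ∈ Sp4Z, ε (g * γ) = 1 → ε γ = 1 := by
    intro g hg h1 γ hγ h
    rwa [hε.2.1 g hg γ hγ, h1, one_mul] at h
  have rel : ∀ γ ∈ Sp4Z, ∀ i j, γ 0 i * γ 2 j + γ 1 i * γ 3 j - γ 2 i * γ 0 j - γ 3 i * γ 1 j = J4 i j := by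
    intro γ h i j
    have h' : γᵀ * J4 * γ = J4 := h
    rw [← h']
    simp [J4, Matrix.mul_apply, Fin.sum_univ_four]
    ring
  -- final stage
  have st5 : ∀ γ ∈ Sp4Z, γ 0 0 = 1 → γ 1 0 = 0 → γ 2 0 = 0 → γ 3 0 = 0 →
      γ 1 1 = 1 → γ 1 3 = 0 → γ 3 1 = 0 → γ 3 3 = 1 → ε γ = 1 := by
    intro γ hγ h00 h10 h20 h30 h11 h13 h31 h33
    have r := rel γ hγ
    have r01 := r 0 1
    have r02 := r 0 2
    have r03 := r 0 3
    have r12 := r 1 2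
    have r23 := r 2 3
    simp [J4, h00, h10, h20, h30, h11, h13, h31, h33] at r01 r02 r03 r12 r23
    simp [r01, r02, r03] at r12 r23
    have hγe : γ = i13 (slT (γ 0 2 + γ 0 3 * γ 0 1)) * (tsh (γ 0 3) * iu (slT (γ 0 1))) := by
      ext i j
      fin_cases i <;> fin_cases j <;>
        simp [i13, tsh, slT, iu, Matrix.mul_apply, Fin.sum_univ_four, *] <;> linarith
    rw [hγe, hε.2.1 _ (i13_mem _) _ (Sp4Z_mul (tsh_mem _) (iu_mem _)),
      hε.2.1 _ (tsh_mem _) _ (iu_mem _), e13, esh, eu]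
    norm_num
  have st4 : ∀ γ ∈ Sp4Z, γ 0 0 = 1 → γ 1 0 = 0 → γ 2 0 = 0 → γ 3 0 = 0 → ε γ = 1 := by
    intro γ hγ h00 h10 h20 h30
    have r := rel γ hγ
    have r01 := r 0 1
    have r02 := r 0 2
    have r03 := r 0 3
    have r13 := r 1 3
    simp [J4, h00, h10, h20, h30] at r01 r02 r03 r13
    simp [r01, r02, r03] at r13
    have hd : γ 3 3 * γ 1 1 - (-γ 1 3) * (-γ 3 1) = 1 := by linarith
    refine red (i24 ⟨!![γ 3 3, -γ 1 3; -γ 3 1, γ 1 1], by rw [Matrix.det_fin_two_of]; exact hd⟩)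
      (i24_mem _) (e24 _) γ hγ ?_
    apply st5 _ (Sp4Z_mul (i24_mem _) hγ) <;>
      simp [i24, Matrix.mul_apply, Fin.sum_univ_four, *] <;> linarith
  have st3 : ∀ γ ∈ Sp4Z, γ 1 0 = 0 → γ 2 0 = 0 → γ 3 0 = 0 → ε γ = 1 := by
    intro γ hγ h10 h20 h30
    have r02 := rel γ hγ 0 2
    simp [J4, h10, h20, h30] at r02
    rcases Int.eq_one_or_neg_one_of_mul_eq_one r02 with h | h
    · exact st4 γ hγ h h10 h20 h30
    · refine red (i13 (ModularGroup.S * ModularGroup.S)) (i13_mem _) (e13 _) γ hγ ?_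
      have hSS : i13 (ModularGroup.S * ModularGroup.S) = !![-1,0,0,0;0,1,0,0;0,0,-1,0;0,0,0,1] := by decide
      apply st4 _ (Sp4Z_mul (i13_mem _) hγ) <;> rw [hSS] <;>
        simp [Matrix.mul_apply, Fin.sum_univ_four, *]
  have st2 : ∀ γ ∈ Sp4Z, γ 2 0 = 0 → γ 3 0 = 0 → ε γ = 1 := by
    intro γ hγ h20 h30
    obtain ⟨g, hg⟩ := col_red (γ 0 0) (γ 1 0)
    refine red (iu g) (iu_mem _) (eu _) γ hγ ?_
    apply st3 _ (Sp4Z_mul (iu_mem _) hγ) <;> simp [iu, Matrix.mul_apply, Fin.sum_univ_four, *]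
  have st1 : ∀ γ ∈ Sp4Z, γ 2 0 = 0 → ε γ = 1 := by
    intro γ hγ h20
    obtain ⟨g, hg⟩ := col_red (γ 1 0) (γ 3 0)
    refine red (i24 g) (i24_mem _) (e24 _) γ hγ ?_
    apply st2 _ (Sp4Z_mul (i24_mem _) hγ) <;> simp [i24, Matrix.mul_apply, Fin.sum_univ_four, *]
  obtain ⟨g, hg⟩ := col_red (γ 0 0) (γ 2 0)
  refine red (i13 g) (i13_mem _) (e13 _) γ hγ ?_
  apply st1 _ (Sp4Z_mul (i13_mem _) hγ); simp [i13, Matrix.mul_apply, Fin.sum_univ_four, *]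

lemma eps_T (hε : IsEps ε) : ε (i13 ModularGroup.T) = -1 := by
  rcases hε.1 _ (i13_mem ModularGroup.T) with h | h
  · obtain ⟨γ, hγ, hne⟩ := hε.2.2
    exact absurd (eps_triv hε h γ hγ) hne
  · exact h

lemma eps_ta (hε : IsEps ε) : ε (ta 1) = -1 := eps_T hε
lemma eps_tb (hε : IsEps ε) : ε (tb 1) = -1 := by rw [tb_eq, eps_i24 hε]; exact eps_T hε
lemma eps_tsh1 (hε : IsEps ε) : ε (tsh 1) = -1 := by rw [eps_tsh hε, eps_tb hε]
lemma eps_u (hε : IsEps ε) : ε (iu ModularGroup.T) = -1 := by rw [eps_iuT hε, eps_T hε]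
lemma eps_S1 (hε : IsEps ε) : ε (i13 ModularGroup.S) = -1 :=
  (hom_S (epsHom hε i13 i13_mem i13_one i13_mul) (fun g => eps_sq hε (i13_mem g))).trans (eps_T hε)
lemma eps_uS (hε : IsEps ε) : ε (iu ModularGroup.S) = -1 :=
  (hom_S (epsHom hε iu iu_mem iu_one iu_mul) (fun g => eps_sq hε (iu_mem g))).trans (eps_u hε)

def nG : Matrix (Fin 4) (Fin 4) ℤ := !![-1,0,0,0; 0,1,0,0; 0,0,-1,0; 0,0,0,1]
def sG : Matrix (Fin 4) (Fin 4) ℤ := !![0,1,0,0; 1,0,0,0; 0,0,0,1; 0,0,1,0]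
lemma nG_eq : nG = i13 ModularGroup.S * i13 ModularGroup.S := by decide
lemma sG_eq : sG = nG * iu ModularGroup.S := by decide
lemma nG_mem : nG ∈ Sp4Z := nG_eq ▸ Sp4Z_mul (i13_mem _) (i13_mem _)
lemma sG_mem : sG ∈ Sp4Z := sG_eq ▸ Sp4Z_mul nG_mem (iu_mem _)
lemma eps_nG (hε : IsEps ε) : ε nG = 1 := by
  rw [nG_eq, hε.2.1 _ (i13_mem _) _ (i13_mem _), eps_sq hε (i13_mem _)]
lemma eps_sG (hε : IsEps ε) : ε sG = -1 := by
  rw [sG_eq, hε.2.1 _ nG_mem _ (iu_mem _), eps_nG hε, eps_uS hε, one_mul]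
end epsv

def Mk (a z b : ℂ) : Fin 2 → Fin 2 → ℂ := ![![a, z], ![z, b]]

lemma Mk_mem (a z b : ℂ) : Mk a z b ∈ H2 ↔ (a, z, b) ∈ DD := by
  have hM : (Matrix.of fun i j => (Mk a z b i j).im) = !![a.im, z.im; z.im, b.im] := by
    ext i j; fin_cases i <;> fin_cases j <;> rfl
  constructor
  · rintro ⟨_, h⟩
    rw [hM] at h
    have h1 := h.det_pos
    have h2 := h.diag_pos (i := 0)
    rw [Matrix.det_fin_two_of] at h1
    exact ⟨h2, by show z.im ^ 2 < a.im * b.im; nlinarith⟩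
  · rintro ⟨h1, h2⟩
    change 0 < a.im at h1
    change z.im ^ 2 < a.im * b.im at h2
    refine ⟨?_, ?_⟩
    · ext i j; fin_cases i <;> fin_cases j <;> rfl
    · rw [hM]
      apply Matrix.PosDef.of_dotProduct_mulVec_pos
      · ext i j; fin_cases i <;> fin_cases j <;> simp
      · intro x hx
        simp [dotProduct, Matrix.mulVec, Fin.sum_univ_two]
        have hx' : x 0 ≠ 0 ∨ x 1 ≠ 0 := by
          by_contra! hc
          apply hx
          ext i; fin_cases i
          · exact hc.1
          · exact hc.2
        have key : 0 < a.im * (x 0 * (a.im * x 0 + z.im * x 1) + x 1 * (z.im * x 0 + b.im * x 1)) := by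
          have e : a.im * (x 0 * (a.im * x 0 + z.im * x 1) + x 1 * (z.im * x 0 + b.im * x 1))
            = (a.im * x 0 + z.im * x 1)^2 + (a.im * b.im - z.im^2) * (x 1)^2 := by ring
          rw [e]
          by_cases h : x 1 = 0
          · have h0 : x 0 ≠ 0 := by tauto
            rw [h]
            have : 0 < (a.im * x 0)^2 := by positivity
            simpa using this
          · have : 0 < (a.im * b.im - z.im^2) := by linarith
            positivity
        exact (mul_pos_iff_of_pos_left h1).1 key

lemma Mk_eq {τ : Fin 2 → Fin 2 → ℂ} (h : τ ∈ H2) : τ = Mk (τ 0 0) (τ 0 1) (τ 1 1) := by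
  have := h.1.apply 0 1
  ext i j; fin_cases i <;> fin_cases j
  · rfl
  · rfl
  · exact this
  · rfl

lemma moeb_eq {γ : Matrix (Fin 4) (Fin 4) ℤ} {τ τ' : Fin 2 → Fin 2 → ℂ} (hd : (den γ τ).det ≠ 0)
    (h : blk γ 0 0 * Matrix.of τ + blk γ 0 1 = Matrix.of τ' * den γ τ) : moeb γ τ = τ' := by
  unfold moeb
  rw [h, Matrix.mul_nonsing_inv_cancel_right _ _ (isUnit_iff_ne_zero.mpr hd)]
  rfl

lemma den_one {γ : Matrix (Fin 4) (Fin 4) ℤ} (h0 : blk γ 1 0 = 0) (τ) : den γ τ = blk γ 1 1 := by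
  rw [den, h0, zero_mul, zero_add]

lemma trans_law {j : ℕ} {k : ℤ} {Γ χ F} (hF : IsSiegelCuspForm j k Γ χ F) {γ τ τ'} (hγ : γ ∈ Γ) (hτ : τ ∈ H2)
    (d : Matrix (Fin 2) (Fin 2) ℂ) (hden : den γ τ = d) (hd : d.det ≠ 0)
    (h : blk γ 0 0 * Matrix.of τ + blk γ 0 1 = Matrix.of τ' * d) :
    F τ' = χ γ • wt j k d (F τ) := by
  subst hden
  rw [← hF.2.1 γ hγ τ hτ, moeb_eq hd h]

lemma symCoeff_U (j : ℕ) (l i : Fin (j + 1)) : symCoeff j !![1, 0; -1, 1] l i =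
    if (l:ℕ) ≤ i then (-1)^((i:ℕ)-l) * ((j-l).choose ((i:ℕ)-l) : ℂ) else 0 := by
  have e : (1 - Polynomial.X : Polynomial ℂ) = (-1) * (Polynomial.X + Polynomial.C (-1)) := by
    simp [sub_eq_add_neg]
  simp only [symCoeff]
  simp [-Fin.val_fin_le]
  rw [Polynomial.coeff_mul_X_pow', ← sub_eq_add_neg, e, mul_pow]
  split_ifs with h
  · have e2 : ((-1 : Polynomial ℂ))^(j - (l:ℕ)) = Polynomial.C ((-1)^(j - (l:ℕ))) := by simp
    rw [e2, Polynomial.coeff_C_mul, Polynomial.coeff_X_add_C_pow, ← mul_assoc, ← pow_add]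
    congr 1
    have hi := i.2
    rcases Nat.even_or_odd ((i:ℕ) - l) with h' | h'
    · rw [h'.neg_one_pow, Even.neg_one_pow]
      rcases h' with ⟨r, hr⟩
      exact ⟨j - l - r, by omega⟩
    · rw [h'.neg_one_pow, Odd.neg_one_pow]
      rcases h' with ⟨r, hr⟩
      exact ⟨j - l - r - 1, by omega⟩
  · rfl

lemma symCoeff_P (j : ℕ) (l i : Fin (j + 1)) : symCoeff j !![0, 1; 1, 0] l i =
    if l = Fin.rev i then 1 else 0 := by
  simp only [symCoeff]
  simp [Polynomial.coeff_X_pow]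
  have := l.2
  have := i.2
  congr 1
  rw [Fin.ext_iff, Fin.val_rev]
  apply propext; omega

lemma symCoeff_N (j : ℕ) (hj : Even j) (l i : Fin (j + 1)) : symCoeff j !![-1, 0; 0, 1] l i =
    if l = i then (-1)^(i:ℕ) else 0 := by
  simp only [symCoeff]
  have e2 : ((-1 : Polynomial ℂ))^(j - (l:ℕ)) = Polynomial.C ((-1)^(j - (l:ℕ))) := by simp
  simp
  rw [e2, Polynomial.coeff_C_mul, Polynomial.coeff_X_pow]
  by_cases h : l = i
  · subst h
    simp
    have := l.2
    rcases hj with ⟨r, hr⟩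
    rcases Nat.even_or_odd (l:ℕ) with h' | h'
    · rw [h'.neg_one_pow, Even.neg_one_pow]
      rcases h' with ⟨s, hs⟩
      exact ⟨r - s, by omega⟩
    · rw [h'.neg_one_pow, Odd.neg_one_pow]
      rcases h' with ⟨s, hs⟩
      exact ⟨r - s - 1, by omega⟩
  · have h' : ¬ (i:ℕ) = l := fun e => h (Fin.ext e.symm)
    simp [h, h']

lemma symCoeff_S (j : ℕ) (a z : ℂ) (l i : Fin (j + 1)) : symCoeff j !![a, z; 0, 1] l i =
    a^(j-l) * (((l:ℕ).choose i : ℂ) * z^((l:ℕ)-i)) := by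
  simp only [symCoeff]
  simp
  rw [← Polynomial.C_pow, Polynomial.coeff_C_mul, add_comm (Polynomial.C z), Polynomial.coeff_X_add_C_pow]
  ring

lemma symAct_one (j : ℕ) (v : Fin (j+1) → ℂ) : symAct j 1 v = v := by
  ext i
  simp [symAct, symCoeff, Polynomial.coeff_X_pow, Fin.val_inj]

def symL (j : ℕ) (m : Matrix (Fin 2) (Fin 2) ℂ) : (Fin (j+1) → ℂ) →L[ℂ] (Fin (j+1) → ℂ) :=
  LinearMap.toContinuousLinearMap
    { toFun := symAct j m, map_add' := symAct_add j m, map_smul' := symAct_smul j m }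
lemma symL_apply (j m v) : symL j m v = symAct j m v := rfl

lemma DD_ne {a z b : ℂ} (h : (a,z,b) ∈ DD) : a ≠ 0 := by
  rintro rfl
  exact absurd h.1 (by simp)

lemma cont_Mk : Differentiable ℂ (fun p : ℂ × ℂ × ℂ => Mk p.1 p.2.1 p.2.2) := by
  rw [differentiable_pi]; intro i
  rw [differentiable_pi]; intro j
  fin_cases i <;> fin_cases j <;> simp [Mk] <;> fun_prop

theorem full_of {j : ℕ} (hj : Even j) {ε F} (hε : IsEps ε) (hF : IsSiegelCuspForm j 2 Sp4Z ε F) :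
    Full j (fun a z b => F (Mk a z b)) (symL j !![1, 0; -1, 1]) (-symL j !![0, 1; 1, 0])
      (symL j !![-1, 0; 0, 1]) := by
  have hdiff : DifferentiableOn ℂ (fun p : ℂ × ℂ × ℂ => F (Mk p.1 p.2.1 p.2.2)) DD :=
    hF.1.comp cont_Mk.differentiableOn (fun p hp => (Mk_mem _ _ _).2 hp)
  have trl : ∀ (γ : Matrix (Fin 4) (Fin 4) ℤ) (x y w : ℝ), γ ∈ Sp4Z → ε γ = -1 → blk γ 0 0 = 1 →
      blk γ 0 1 = !![(x:ℂ), y; y, w] → blk γ 1 0 = 0 → blk γ 1 1 = 1 → ∀ a z b,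
      F (Mk (a + x) (z + y) (b + w)) = - F (Mk a z b) := by
    intro γ x y w hγ he h00 h01 h10 h11 a z b
    by_cases h : (a, z, b) ∈ DD
    · rw [trans_law hF hγ ((Mk_mem _ _ _).2 h) 1 ((den_one h10 _).trans h11) (by simp)
        (τ' := Mk (a + x) (z + y) (b + w)), he, wt, symAct_one]
      · simp
      · rw [h00, h01, one_mul, mul_one]
        ext i j; fin_cases i <;> fin_cases j <;> simp [Mk]
    · have h' : (a + x, z + y, b + w) ∉ DD := by
        intro hc; apply h
        simpa [DD] using hc
      rw [hF.2.2.2 _ (fun hc => h ((Mk_mem _ _ _).1 hc)), hF.2.2.2 _ (fun hc => h' ((Mk_mem _ _ _).1 hc)), neg_zero]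
  refine ⟨⟨hdiff.continuousOn, ?_, ?_, ?_, ?_, ?_, ?_, ?_, ?_, ?_⟩, ?_, ?_, ?_, ?_⟩
  · intro z b
    exact hdiff.comp (f := fun a => (a, z, b)) (by fun_prop) (fun a ha => ha)
  · intro a b
    exact hdiff.comp (f := fun z => (a, z, b)) (by fun_prop) (fun a ha => ha)
  · intro a z
    exact hdiff.comp (f := fun b => (a, z, b)) (by fun_prop) (fun a ha => ha)
  · intro a z b
    have := trl (ta 1) 1 0 0 (ta_mem 1) (eps_ta hε)
      (by ext i j; fin_cases i <;> fin_cases j <;> simp [blk, ta])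
      (by ext i j; fin_cases i <;> fin_cases j <;> simp [blk, ta])
      (by ext i j; fin_cases i <;> fin_cases j <;> simp [blk, ta])
      (by ext i j; fin_cases i <;> fin_cases j <;> simp [blk, ta]) a z b
    simpa using this
  · intro a z b
    have := trl (tb 1) 0 0 1 (tb_mem 1) (eps_tb hε)
      (by ext i j; fin_cases i <;> fin_cases j <;> simp [blk, tb])
      (by ext i j; fin_cases i <;> fin_cases j <;> simp [blk, tb])
      (by ext i j; fin_cases i <;> fin_cases j <;> simp [blk, tb])
      (by ext i j; fin_cases i <;> fin_cases j <;> simp [blk, tb]) a z b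
    simpa using this
  · intro a z b
    have := trl (tsh 1) 0 1 0 (tsh_mem 1) (eps_tsh1 hε)
      (by ext i j; fin_cases i <;> fin_cases j <;> simp [blk, tsh])
      (by ext i j; fin_cases i <;> fin_cases j <;> simp [blk, tsh])
      (by ext i j; fin_cases i <;> fin_cases j <;> simp [blk, tsh])
      (by ext i j; fin_cases i <;> fin_cases j <;> simp [blk, tsh]) a z b
    simpa using this
  · intro a z b h
    show F _ = _
    rw [trans_law hF (iu_mem ModularGroup.T) ((Mk_mem _ _ _).2 h) !![1, 0; -1, 1]
      (τ' := Mk (a + (2*z+b)) (z + b) b), eps_u hε, wt, symL_apply]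
    · simp [Matrix.det_fin_two_of]
    · ext i j; fin_cases i <;> fin_cases j <;>
        simp [den, blk, iu, ModularGroup.T, Mk, Matrix.mul_apply, Fin.sum_univ_two]
    · simp [Matrix.det_fin_two_of]
    · ext i j; fin_cases i <;> fin_cases j <;>
        simp [blk, iu, ModularGroup.T, Mk, Matrix.mul_apply, Fin.sum_univ_two] <;> ring
  · intro a z b h
    show F _ = _
    rw [trans_law hF sG_mem ((Mk_mem _ _ _).2 h) !![0, 1; 1, 0]
      (τ' := Mk b z a), eps_sG hε, wt, ContinuousLinearMap.neg_apply, symL_apply]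
    · simp [Matrix.det_fin_two_of]
    · ext i j; fin_cases i <;> fin_cases j <;>
        simp [den, blk, sG, Mk, Matrix.mul_apply, Fin.sum_univ_two]
    · simp [Matrix.det_fin_two_of]
    · ext i j; fin_cases i <;> fin_cases j <;>
        simp [blk, sG, Mk, Matrix.mul_apply, Fin.sum_univ_two]
  · intro a z b h
    show F _ = _
    rw [trans_law hF nG_mem ((Mk_mem _ _ _).2 h) !![-1, 0; 0, 1]
      (τ' := Mk a (-z) b), eps_nG hε, wt, symL_apply]
    · simp [Matrix.det_fin_two_of]
    · ext i j; fin_cases i <;> fin_cases j <;>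
        simp [den, blk, nG, Mk, Matrix.mul_apply, Fin.sum_univ_two]
    · simp [Matrix.det_fin_two_of]
    · ext i j; fin_cases i <;> fin_cases j <;>
        simp [blk, nG, Mk, Matrix.mul_apply, Fin.sum_univ_two]
  · intro v i
    simp [symL_apply, symAct, symCoeff_P]
  · intro v i
    simp [symL_apply, symAct, symCoeff_N j hj]
  · intro v i
    simp only [symL_apply, symAct, symCoeff_U]
  · intro a z b h i
    have ha := DD_ne h
    show F _ i = _
    rw [trans_law hF (i13_mem ModularGroup.S) ((Mk_mem _ _ _).2 h) !![a, z; 0, 1]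
      (τ' := Mk (-1/a) (z/a) (b - z^2/a)), eps_S1 hε, wt]
    · simp only [Pi.smul_apply, symAct, symCoeff_S, Matrix.det_fin_two_of, smul_eq_mul]
      simp
    · ext i j; fin_cases i <;> fin_cases j <;>
        simp [den, blk, i13, ModularGroup.S, Mk, Matrix.mul_apply, Fin.sum_univ_two]
    · simpa [Matrix.det_fin_two_of] using ha
    · ext i j; fin_cases i <;> fin_cases j <;>
        simp [blk, i13, ModularGroup.S, Mk, Matrix.mul_apply, Fin.sum_univ_two] <;> field_simp <;> ring

theorem van_of {j : ℕ} (hj : Even j) {ε} (hε : IsEps ε)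
    (hz : ∀ (Φ : ℂ → ℂ → ℂ → Fin (j + 1) → ℂ) (L R Nn), Full j Φ L R Nn →
      ∀ a z b, (a, z, b) ∈ DD → Φ a z b = 0) : SiegelCusp j 2 Sp4Z ε = ⊥ := by
  rw [Submodule.eq_bot_iff]
  intro F hF
  have hF' : IsSiegelCuspForm j 2 Sp4Z ε F := hF
  funext τ
  by_cases h : τ ∈ H2
  · have e := Mk_eq h
    have h' := h
    rw [e, Mk_mem] at h'
    rw [e]
    exact hz _ _ _ _ (full_of hj hε hF') _ _ _ h'
  · exact hF'.2.2.2 τ h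

/-- The spaces `S_{14,2}(Γ₂,ε)` and `S_{16,2}(Γ₂,ε)` are both zero. -/
theorem vanishing_S14_S16_eps (ε : Matrix (Fin 4) (Fin 4) ℤ → ℂ) (hε : IsEps ε) :
    SiegelCusp 14 2 Sp4Z ε = ⊥ ∧ SiegelCusp 16 2 Sp4Z ε = ⊥ := by
  constructor
  · exact van_of (by decide) hε fun Φ L R Nn H => H.zero (by norm_num) (by norm_num)
      (fun q h1 h2 h3 h4 h5 => lin14 q h1 h2 h3 h4 h5)
  · exact van_of (by decide) hε fun Φ L R Nn H => H.zero (by norm_num) (by norm_num)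
      (fun q h1 h2 h3 h4 h5 => lin16 q h1 h2 h3 h4 h5)
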